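/- arXiv:gr-qc/0609074 — 2 statements merged into one kernel-verified Lean document; each statement's English description precedes it below -/
import Mathlib

section
/- Let k = 3 + 2l + 1/2 if l ≥ −3/4 and k = 2 if −1 < l < −3/4. Suppose there exists η̌ > 0 such that σ'(η) ≥ 1/(2(3+2l)) + k·σ(η) for all 0 < η ≤ η̌, and let Ω̌ be the value of Ω corresponding to η̌. Let γ be an interior orbit of the Einstein–Vlasov dynamical system such that, as λ → −∞, (U,V,Ω)(λ) converges either to (1, 0, Ω₀) or to ((3+2l)/(4+2l), 0, Ω₀) for some Ω₀ ≤ Ω̌. Then Ω(λ) → 0 and V(λ) → 1 as λ → +∞; that is, the ω-limit set of γ lies in {Ω = 0} ∩ {V = 1}. -/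
open Filter Set

/-
In the coordinates `u = U/(1-U)`, `q = V/(1-V)` the first two equations read
`u' = m u A` and `q' = m q B` with `m = (1-U)(1-V)`, `A = a - u - (1+σ-σ')(1+σu)q`,
`B = (u-1)(1+2σq) + σ'(1+σu)q` and `a = 3+2l`. The barrier `w = u + q/2 - a` satisfies
`w' = m (w C + q G)`, and the hypothesis on `σ'` is what makes `G > 0` for `0 < u ≤ a`. Hence the
flow crosses `w = 0` only upwards, and both admissible `α`-limits start the orbit in `w > 0`.

There `B ≥ (1 - 1/a) u > 0`, so `V` increases. If its limit `v` were less than `1`, then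
`U' ≤ N (log q)'` for some constant `N`, so that `U` converges, and
`(log q)' ≥ (1 - 1/a) (1-V) U` forces its limit to be `0`; but then
`(log w)' ≥ m (q/(2a) - u) → v/(2a) > 0` makes `w` unbounded, a contradiction. Finally `V` being
bounded away from `0` drives `η`, and with it `Ω`, to `0`.
-/

open scoped Topology

section RealLine

variable {f f' g g' : ℝ → ℝ} {c : ℝ}

theorem tendsto_atTop_of_eventually_le_deriv (hf : ∀ t, HasDerivAt f (f' t) t) (hc : 0 < c)
    (hf' : ∀ᶠ t in atTop, c ≤ f' t) : Tendsto f atTop atTop := by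
  obtain ⟨T, hT⟩ := eventually_atTop.1 hf'
  have hgrowth : ∀ t ≥ T, f T + c * (t - T) ≤ f t := fun t ht ↦ by
    have := (convex_Ici T).mul_sub_le_image_sub_of_le_deriv
      (fun s _ ↦ (hf s).continuousAt.continuousWithinAt)
      (fun s _ ↦ (hf s).differentiableAt.differentiableWithinAt)
      (fun s hs ↦ (hT s (interior_subset hs)).trans_eq (hf s).deriv.symm)
      T self_mem_Ici t ht ht
    linarith
  refine tendsto_atTop_mono' atTop (eventually_atTop.2 ⟨T, hgrowth⟩)
    (tendsto_atTop_add_const_left _ _ (Tendsto.const_mul_atTop hc ?_))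
  exact tendsto_atTop_add_const_right _ (-T) tendsto_id

theorem nonpos_of_tendsto_of_eventually_le_deriv (hf : ∀ t, HasDerivAt f (f' t) t)
    (hbdd : IsBoundedUnder (· ≤ ·) atTop f) (hg : Tendsto g atTop (𝓝 c))
    (hgf : ∀ᶠ t in atTop, g t ≤ f' t) : c ≤ 0 := by
  by_contra! hc
  refine not_isBoundedUnder_of_tendsto_atTop
    (tendsto_atTop_of_eventually_le_deriv hf (half_pos hc) ?_) hbdd
  filter_upwards [hg.eventually_const_le (half_lt_self hc), hgf] with t h₁ h₂ using h₁.trans h₂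

theorem exists_tendsto_atTop_of_eventually_deriv_le (hf : ∀ t, HasDerivAt f (f' t) t)
    (hg : ∀ t, HasDerivAt g (g' t) t) (hle : ∀ᶠ t in atTop, f' t ≤ g' t)
    (hbdd : BddBelow (range f)) (hlim : Tendsto g atTop (𝓝 c)) :
    ∃ x, Tendsto f atTop (𝓝 x) := by
  obtain ⟨T, hT⟩ := eventually_atTop.1 hle
  have hd : ∀ t, HasDerivAt (fun s ↦ f s - g s) (f' t - g' t) t := fun t ↦ (hf t).sub (hg t)
  have hanti : AntitoneOn (fun t ↦ f t - g t) (Ici T) :=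
    antitoneOn_of_hasDerivWithinAt_nonpos (convex_Ici T)
      (fun t _ ↦ (hd t).continuousAt.continuousWithinAt) (fun t _ ↦ (hd t).hasDerivWithinAt)
      (fun t ht ↦ sub_nonpos.2 (hT t (interior_subset ht)))
  have hanti' : Antitone (fun t ↦ f (max T t) - g (max T t)) := fun s t hst ↦
    hanti (le_max_left T s) (le_max_left T t) (max_le_max_left T hst)
  have heq : (fun t ↦ f (max T t) - g (max T t)) =ᶠ[atTop] fun t ↦ f t - g t := by
    filter_upwards [eventually_ge_atTop T] with t ht using by rw [max_eq_right ht]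
  rcases tendsto_atTop_of_antitone hanti' with h | ⟨x, h⟩
  · have hbot : Tendsto f atTop atBot := by
      simpa using (h.congr' heq).atBot_add hlim
    obtain ⟨m, hm⟩ := hbdd
    obtain ⟨t, ht⟩ := (hbot.eventually_lt_atBot m).exists
    exact absurd (hm ⟨t, rfl⟩) ht.not_ge
  · exact ⟨x + c, by simpa using (h.congr' heq).add hlim⟩

theorem pos_of_nonneg_of_deriv_pos_of_eq_zero (hf : ∀ t, HasDerivAt f (f' t) t)
    (hzero : ∀ t, f t = 0 → 0 < f' t) {T t : ℝ} (hT : 0 ≤ f T) (ht : T < t) : 0 < f t := by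
  have hnonneg : ∀ s ≥ T, 0 ≤ f s := fun s hs ↦
    image_le_of_deriv_right_lt_deriv_boundary' (f := fun _ ↦ 0) (f' := fun _ ↦ 0)
      continuousOn_const (fun x _ ↦ hasDerivWithinAt_const ..) hT
      (fun x _ ↦ (hf x).continuousAt.continuousWithinAt) (fun x _ ↦ (hf x).hasDerivWithinAt)
      (fun x _ hx ↦ hzero x hx.symm) (right_mem_Icc.2 hs)
  refine (hnonneg t ht.le).lt_of_ne' fun h0 ↦ (hzero t h0).ne' ?_
  have hmin : IsLocalMin f t := by
    filter_upwards [Ici_mem_nhds ht] with s hs using h0.trans_le (hnonneg s hs)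
  exact hmin.hasDerivAt_eq_zero (hf t)

theorem pos_of_frequently_nonneg_atBot (hf : ∀ t, HasDerivAt f (f' t) t)
    (hzero : ∀ t, f t = 0 → 0 < f' t) (h : ∃ᶠ t in atBot, 0 ≤ f t) (t : ℝ) : 0 < f t := by
  obtain ⟨T, hT, hTt⟩ := (h.and_eventually (eventually_lt_atBot t)).exists
  exact pos_of_nonneg_of_deriv_pos_of_eq_zero hf hzero hT hTt

theorem frequently_nonneg_atBot_of_tendsto_zero (hf : ∀ t, HasDerivAt f (f' t) t)
    (hlim : Tendsto f atBot (𝓝 0)) (hf' : ∀ᶠ t in atBot, f t < 0 → 0 ≤ f' t) :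
    ∃ᶠ t in atBot, 0 ≤ f t := by
  intro hneg
  obtain ⟨T, hT⟩ := eventually_atBot.1 (hf'.and hneg)
  have hlt : ∀ t ≤ T, f t < 0 := fun t ht ↦ not_le.1 (hT t ht).2
  have hmono : MonotoneOn f (Iic T) :=
    monotoneOn_of_hasDerivWithinAt_nonneg (convex_Iic T)
      (fun t _ ↦ (hf t).continuousAt.continuousWithinAt) (fun t _ ↦ (hf t).hasDerivWithinAt)
      (fun t ht ↦ (hT t (interior_subset (s := Iic T) ht)).1
        (hlt t (interior_subset (s := Iic T) ht)))
  refine (hlt T le_rfl).not_ge (le_of_tendsto hlim ?_)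
  filter_upwards [eventually_le_atBot T] with t ht using hmono ht self_mem_Iic ht

end RealLine

section Odds

/-- The odds `x / (1 - x)`, which undo the compactification `x ↦ x / (1 + x)` of `(0, ∞)` to
`(0, 1)`; they turn `U`, `V` back into the unbounded variables `u`, `q`. -/
noncomputable def odds (x : ℝ) : ℝ := x / (1 - x)

theorem odds_pos {x : ℝ} (hx : x ∈ Ioo 0 1) : 0 < odds x := div_pos hx.1 (sub_pos.2 hx.2)

theorem odds_zero : odds 0 = 0 := zero_div _

theorem odds_div_add_one {a : ℝ} (ha : a + 1 ≠ 0) : odds (a / (a + 1)) = a := by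
  unfold odds; field_simp; ring

theorem tendsto_odds_comp {α : Type*} {f : α → ℝ} {F : Filter α} {x : ℝ} (hx : x ≠ 1)
    (hf : Tendsto f F (𝓝 x)) : Tendsto (fun s ↦ odds (f s)) F (𝓝 (odds x)) :=
  hf.div (hf.const_sub 1) (sub_ne_zero.2 hx.symm)

theorem hasDerivAt_odds_comp {f : ℝ → ℝ} {r t : ℝ} (ht : f t ≠ 1)
    (hf : HasDerivAt f (f t * (1 - f t) * r) t) :
    HasDerivAt (fun s ↦ odds (f s)) (odds (f t) * r) t := by
  have hne : 1 - f t ≠ 0 := sub_ne_zero.2 ht.symm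
  refine (hf.div (hf.const_sub 1) hne).congr_deriv ?_
  unfold odds; field_simp; ring

end Odds

section Rates

/-- The logarithmic derivative of `u`, in the time variable in which `dλ` is divided by
`(1 - U) (1 - V)`; `S` and `R` stand for `σ` and `σ'`, and `a` for `3 + 2l`. -/
def uRate (a S R u q : ℝ) : ℝ := a - u - (1 + S - R) * (1 + S * u) * q

/-- The logarithmic derivative of `q`, in the same time variable as for `uRate`. -/
def qRate (S R u q : ℝ) : ℝ := (u - 1) * (1 + 2 * S * q) + R * (1 + S * u) * q

/-- The function `w` whose positivity set is forward invariant; its zero set is the line joining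
the equilibrium `(u, q) = (a, 0)` to `(0, 2a)`. -/
noncomputable def barrier (a u q : ℝ) : ℝ := u + q / 2 - a

/-- The coefficient `C` in the evolution `w C + q G` of the barrier. -/
def barrierRate (S R u q : ℝ) : ℝ := -u + q * (R * (1 + S * u) + 2 * S * (u - 1))

/-- The coefficient `G` in the evolution `w C + q G` of the barrier. -/
noncomputable def barrierSource (a S R u : ℝ) : ℝ :=
  -(1 / 2) + a * R * (1 + S * u) - S * u - S * u ^ 2 - S ^ 2 * u ^ 2
    + 2 * S * (u - 1) * (a - u)

variable {a k S R u q : ℝ}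

theorem mul_uRate_add_mul_qRate (a S R u q : ℝ) :
    u * uRate a S R u q + q * qRate S R u q / 2 =
      barrier a u q * barrierRate S R u q + q * barrierSource a S R u := by
  unfold uRate qRate barrier barrierRate barrierSource; ring

theorem barrierSource_eq (ha : a ≠ 0) (k S R u : ℝ) :
    barrierSource a S R u = a * (R - (1 / (2 * a) + k * S)) * (1 + S * u)
      + S * ((a - u) * (k - 2) + u * (k - (a + 1 / 2)) + 3 * (u * (a - u)))
      + S ^ 2 * (u * (a * k - u)) := by
  unfold barrierSource; field_simp; ring

theorem barrierSource_pos (ha : 1 < a) (hk : 2 ≤ k) (hak : a + 1 / 2 ≤ k) (hS : 0 < S)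
    (hR : 1 / (2 * a) + k * S ≤ R) (hu : 0 < u) (hua : u ≤ a) : 0 < barrierSource a S R u := by
  have hdefect : 0 ≤ a * (R - (1 / (2 * a) + k * S)) * (1 + S * u) :=
    mul_nonneg (mul_nonneg (by linarith) (sub_nonneg.2 hR)) (by positivity)
  have hlinear : 0 ≤ (a - u) * (k - 2) + u * (k - (a + 1 / 2)) + 3 * (u * (a - u)) := by
    have hua' := sub_nonneg.2 hua
    exact add_nonneg (add_nonneg (mul_nonneg hua' (sub_nonneg.2 hk))
      (mul_nonneg hu.le (sub_nonneg.2 hak))) (mul_nonneg zero_le_three (mul_nonneg hu.le hua'))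
  have hquadratic : 0 < u * (a * k - u) := mul_pos hu (by nlinarith)
  rw [barrierSource_eq (by linarith) k]
  exact add_pos_of_nonneg_of_pos (add_nonneg hdefect (mul_nonneg hS.le hlinear))
    (mul_pos (pow_pos hS 2) hquadratic)

theorem qRate_eq (ha : a ≠ 0) (S R u q : ℝ) :
    qRate S R u q = barrier a u q / a + (1 - 1 / a) * u
      + ((R - (1 / (2 * a) + 2 * S)) * q + (R + 2) * S * (u * q)) := by
  unfold qRate barrier; field_simp; ring

theorem le_qRate (ha : 0 < a) (hS : 0 ≤ S) (hR : 1 / (2 * a) + 2 * S ≤ R) (hu : 0 ≤ u)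
    (hq : 0 ≤ q) (hw : 0 ≤ barrier a u q) : (1 - 1 / a) * u ≤ qRate S R u q := by
  have := sub_nonneg.2 hR
  have hR0 : 0 ≤ R := le_trans (by positivity) hR
  have hrest : 0 ≤ barrier a u q / a
    + ((R - (1 / (2 * a) + 2 * S)) * q + (R + 2) * S * (u * q)) := by positivity
  rw [qRate_eq ha.ne']
  linarith

theorem mul_uRate_le (ha : 1 ≤ a) (hS : 0 ≤ S) (hR : 1 / (2 * a) + 2 * S ≤ R) (hu : 0 ≤ u)
    (hq : 0 ≤ q) (hw : 0 ≤ barrier a u q) {p : ℝ} (hp : 0 ≤ p) (hp1 : p ≤ 1) (hpu : p ≤ u) :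
    p * uRate a S R u q ≤ qRate S R u q + (a + q / (2 * a)) * u := by
  have := sub_nonneg.2 hR
  have hR0 : 0 ≤ R := le_trans (by positivity) hR
  have hpos : 0 ≤ barrier a u q / a + (1 - 1 / a) * u :=
    add_nonneg (by positivity) (mul_nonneg (sub_nonneg.2 ((div_le_one (by linarith)).2 ha)) hu)
  calc p * uRate a S R u q
      = p * a + p * ((R - (1 / (2 * a) + 2 * S)) * q) + p * ((1 / (2 * a) + 2 * S) * q)
        + p * (R * S * (u * q)) - p * (u + (1 + S) * (1 + S * u) * q) := by unfold uRate; ring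
    _ ≤ p * a + p * ((R - (1 / (2 * a) + 2 * S)) * q) + p * ((1 / (2 * a) + 2 * S) * q)
        + p * (R * S * (u * q)) := sub_le_self _ (by positivity)
    _ ≤ u * a + 1 * ((R - (1 / (2 * a) + 2 * S)) * q) + u * ((1 / (2 * a) + 2 * S) * q)
        + 1 * (R * S * (u * q)) := by gcongr
    _ = ((R - (1 / (2 * a) + 2 * S)) * q + (R + 2) * S * (u * q)) + (a + q / (2 * a)) * u := by
      ring
    _ ≤ qRate S R u q + (a + q / (2 * a)) * u := by
      rw [qRate_eq (by linarith : a ≠ 0)]; linarith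

theorem mul_uRate_le_mul_qRate (ha : 1 < a) (hS : 0 ≤ S) (hR : 1 / (2 * a) + 2 * S ≤ R)
    (hu : 0 ≤ u) (hq : 0 ≤ q) (hw : 0 ≤ barrier a u q) {p Q : ℝ} (hp : 0 ≤ p) (hp1 : p ≤ 1)
    (hpu : p ≤ u) (hqQ : q ≤ Q) :
    p * uRate a S R u q ≤ (1 + (a + Q / (2 * a)) / (1 - 1 / a)) * qRate S R u q := by
  have ha' : 0 < 1 - 1 / a := sub_pos.2 ((div_lt_one (by linarith)).2 ha)
  have hu_le : u ≤ qRate S R u q / (1 - 1 / a) := by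
    rw [le_div_iff₀' ha']; exact le_qRate (by linarith) hS hR hu hq hw
  calc p * uRate a S R u q ≤ qRate S R u q + (a + q / (2 * a)) * u :=
        mul_uRate_le ha.le hS hR hu hq hw hp hp1 hpu
    _ ≤ qRate S R u q + (a + Q / (2 * a)) * (qRate S R u q / (1 - 1 / a)) := by
      have hQ := hq.trans hqQ
      gcongr
    _ = (1 + (a + Q / (2 * a)) / (1 - 1 / a)) * qRate S R u q := by ring

theorem le_barrierRate (ha : 0 < a) (hS : 0 ≤ S) (hR : 1 / (2 * a) + 2 * S ≤ R) (hu : 0 ≤ u)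
    (hq : 0 ≤ q) : q / (2 * a) - u ≤ barrierRate S R u q := by
  have := sub_nonneg.2 hR
  have hR0 : 0 ≤ R := le_trans (by positivity) hR
  have hrest : 0 ≤ q * ((R - (1 / (2 * a) + 2 * S)) + (R + 2) * S * u) := by positivity
  unfold barrierRate
  linear_combination hrest

end Rates

/-- The `(U, V)` part of an interior orbit: `S` and `R` are `σ` and `σ'` along the orbit, treated
as given functions of time, and `a` stands for `3 + 2l`. -/
structure PlanarOrbit (a : ℝ) (S R U V : ℝ → ℝ) : Prop where
  mem_U : ∀ t, U t ∈ Ioo (0 : ℝ) 1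
  mem_V : ∀ t, V t ∈ Ioo (0 : ℝ) 1
  hasDerivAt_U : ∀ t, HasDerivAt U (U t * (1 - U t) * ((a - (a + 1) * U t) * (1 - V t)
    - (1 + S t - R t) * ((1 - U t + S t * U t) * V t))) t
  hasDerivAt_V : ∀ t, HasDerivAt V (V t * (1 - V t) * ((2 * U t - 1) * (1 - V t + 2 * S t * V t)
    + R t * ((1 - U t + S t * U t) * V t))) t

namespace PlanarOrbit

variable {a : ℝ} {S R U V : ℝ → ℝ}

theorem timeChange_pos (h : PlanarOrbit a S R U V) (t : ℝ) : 0 < (1 - U t) * (1 - V t) :=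
  mul_pos (sub_pos.2 (h.mem_U t).2) (sub_pos.2 (h.mem_V t).2)

theorem hasDerivAt_U_uRate (h : PlanarOrbit a S R U V) (t : ℝ) :
    HasDerivAt U (U t * (1 - U t) *
      ((1 - U t) * (1 - V t) * uRate a (S t) (R t) (odds (U t)) (odds (V t)))) t := by
  have hU : 1 - U t ≠ 0 := (sub_pos.2 (h.mem_U t).2).ne'
  have hV : 1 - V t ≠ 0 := (sub_pos.2 (h.mem_V t).2).ne'
  convert h.hasDerivAt_U t using 2
  unfold uRate odds; field_simp; ring

theorem hasDerivAt_V_qRate (h : PlanarOrbit a S R U V) (t : ℝ) :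
    HasDerivAt V (V t * (1 - V t) *
      ((1 - U t) * (1 - V t) * qRate (S t) (R t) (odds (U t)) (odds (V t)))) t := by
  have hU : 1 - U t ≠ 0 := (sub_pos.2 (h.mem_U t).2).ne'
  have hV : 1 - V t ≠ 0 := (sub_pos.2 (h.mem_V t).2).ne'
  convert h.hasDerivAt_V t using 2
  unfold qRate odds; field_simp; ring

theorem hasDerivAt_log_odds_V (h : PlanarOrbit a S R U V) (t : ℝ) :
    HasDerivAt (fun s ↦ Real.log (odds (V s)))
      ((1 - U t) * (1 - V t) * qRate (S t) (R t) (odds (U t)) (odds (V t))) t := by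
  have hq := odds_pos (h.mem_V t)
  have := (hasDerivAt_odds_comp (h.mem_V t).2.ne (h.hasDerivAt_V_qRate t)).log hq.ne'
  rwa [mul_div_cancel_left₀ _ hq.ne'] at this

theorem hasDerivAt_barrier (h : PlanarOrbit a S R U V) (t : ℝ) :
    HasDerivAt (fun s ↦ barrier a (odds (U s)) (odds (V s)))
      ((1 - U t) * (1 - V t) *
        (barrier a (odds (U t)) (odds (V t)) * barrierRate (S t) (R t) (odds (U t)) (odds (V t))
          + odds (V t) * barrierSource a (S t) (R t) (odds (U t)))) t := by
  have hu := hasDerivAt_odds_comp (h.mem_U t).2.ne (h.hasDerivAt_U_uRate t)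
  have hq := hasDerivAt_odds_comp (h.mem_V t).2.ne (h.hasDerivAt_V_qRate t)
  refine ((hu.add (hq.div_const 2)).sub_const a).congr_deriv ?_
  rw [← mul_uRate_add_mul_qRate]
  ring

section BarrierCrossing

variable {k : ℝ}

theorem mul_barrierSource_pos (h : PlanarOrbit a S R U V) (ha : 1 < a) (hk : 2 ≤ k)
    (hak : a + 1 / 2 ≤ k) {t : ℝ} (hS : 0 < S t) (hR : 1 / (2 * a) + k * S t ≤ R t)
    (hu : odds (U t) ≤ a) : 0 < odds (V t) * barrierSource a (S t) (R t) (odds (U t)) :=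
  mul_pos (odds_pos (h.mem_V t)) (barrierSource_pos ha hk hak hS hR (odds_pos (h.mem_U t)) hu)

theorem odds_U_le_of_barrier_nonpos (h : PlanarOrbit a S R U V) {t : ℝ}
    (hw : barrier a (odds (U t)) (odds (V t)) ≤ 0) : odds (U t) ≤ a := by
  have := odds_pos (h.mem_V t)
  unfold barrier at hw
  linarith

theorem frequently_barrier_nonneg_of_tendsto_U_one (h : PlanarOrbit a S R U V) (ha : 0 < a)
    (hU : Tendsto U atBot (𝓝 1)) :
    ∃ᶠ t in atBot, 0 ≤ barrier a (odds (U t)) (odds (V t)) := by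
  have hlt : a / (a + 1) < 1 := (div_lt_one (by linarith)).2 (by linarith)
  refine ((hU.eventually_const_lt hlt).mono fun t ht ↦ ?_).frequently
  have hu : a < odds (U t) := by
    rw [div_lt_iff₀ (by linarith)] at ht
    rw [odds, lt_div_iff₀ (sub_pos.2 (h.mem_U t).2)]
    linarith
  have := odds_pos (h.mem_V t)
  unfold barrier
  linarith

theorem frequently_barrier_nonneg_of_tendsto_U_div (h : PlanarOrbit a S R U V) (ha : 1 < a)
    (hk : 2 ≤ k) (hak : a + 1 / 2 ≤ k) (hS : ∀ t, 0 < S t)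
    (hR : ∀ t, 1 / (2 * a) + k * S t ≤ R t) {s r : ℝ} (hSlim : Tendsto S atBot (𝓝 s))
    (hRlim : Tendsto R atBot (𝓝 r)) (hU : Tendsto U atBot (𝓝 (a / (a + 1))))
    (hV : Tendsto V atBot (𝓝 0)) :
    ∃ᶠ t in atBot, 0 ≤ barrier a (odds (U t)) (odds (V t)) := by
  have hu : Tendsto (fun t ↦ odds (U t)) atBot (𝓝 a) := by
    have hne : a / (a + 1) ≠ 1 := ((div_lt_one (by linarith)).2 (by linarith)).ne
    simpa only [odds_div_add_one (by linarith : a + 1 ≠ 0)] using tendsto_odds_comp hne hU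
  have hq : Tendsto (fun t ↦ odds (V t)) atBot (𝓝 0) := by
    simpa only [odds_zero] using tendsto_odds_comp zero_ne_one hV
  have hw : Tendsto (fun t ↦ barrier a (odds (U t)) (odds (V t))) atBot (𝓝 0) := by
    simpa [barrier] using (hu.add (hq.div_const 2)).sub_const a
  have hC : Tendsto (fun t ↦ barrierRate (S t) (R t) (odds (U t)) (odds (V t))) atBot
      (𝓝 (-a)) := by
    simpa [barrierRate] using hu.neg.add (hq.mul ((hRlim.mul ((hSlim.mul hu).const_add 1)).add
      ((hSlim.const_mul 2).mul (hu.sub_const 1))))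
  refine frequently_nonneg_atBot_of_tendsto_zero h.hasDerivAt_barrier hw ?_
  filter_upwards [hC.eventually_le_const (by linarith : -a < 0)] with t hCt hwt
  have hG := h.mul_barrierSource_pos ha hk hak (hS t) (hR t) (h.odds_U_le_of_barrier_nonpos hwt.le)
  exact mul_nonneg (h.timeChange_pos t).le
    (add_nonneg (mul_nonneg_of_nonpos_of_nonpos hwt.le hCt) hG.le)

theorem barrier_pos (h : PlanarOrbit a S R U V) (ha : 1 < a) (hk : 2 ≤ k) (hak : a + 1 / 2 ≤ k)
    (hS : ∀ t, 0 < S t) (hR : ∀ t, 1 / (2 * a) + k * S t ≤ R t)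
    (hw : ∃ᶠ t in atBot, 0 ≤ barrier a (odds (U t)) (odds (V t))) (t : ℝ) :
    0 < barrier a (odds (U t)) (odds (V t)) := by
  refine pos_of_frequently_nonneg_atBot h.hasDerivAt_barrier (fun s hs ↦ ?_) hw t
  rw [hs, zero_mul, zero_add]
  exact mul_pos (h.timeChange_pos s)
    (h.mul_barrierSource_pos ha hk hak (hS s) (hR s) (h.odds_U_le_of_barrier_nonpos hs.le))

end BarrierCrossing

section AboveBarrier

variable (h : PlanarOrbit a S R U V) (ha : 1 < a) (hS : ∀ t, 0 ≤ S t)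
  (hR : ∀ t, 1 / (2 * a) + 2 * S t ≤ R t)
  (hw : ∀ t, 0 < barrier a (odds (U t)) (odds (V t)))
include h ha hS hR hw

theorem le_deriv_log_odds_V (t : ℝ) : (1 - 1 / a) * (U t * (1 - V t)) ≤
    (1 - U t) * (1 - V t) * qRate (S t) (R t) (odds (U t)) (odds (V t)) := by
  have hU : 1 - U t ≠ 0 := (sub_pos.2 (h.mem_U t).2).ne'
  calc (1 - 1 / a) * (U t * (1 - V t))
      = (1 - U t) * (1 - V t) * ((1 - 1 / a) * odds (U t)) := by unfold odds; field_simp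
    _ ≤ _ := mul_le_mul_of_nonneg_left (le_qRate (by linarith) (hS t) (hR t)
        (odds_pos (h.mem_U t)).le (odds_pos (h.mem_V t)).le (hw t).le) (h.timeChange_pos t).le

theorem monotone_V : Monotone V := by
  refine monotone_of_hasDerivAt_nonneg h.hasDerivAt_V_qRate fun t ↦ ?_
  have hV := h.mem_V t
  have ha' : 0 ≤ 1 - 1 / a := sub_nonneg.2 ((div_le_one (by linarith)).2 ha.le)
  have hq : 0 ≤ (1 - 1 / a) * (U t * (1 - V t)) :=
    mul_nonneg ha' (mul_nonneg (h.mem_U t).1.le (sub_nonneg.2 hV.2.le))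
  exact mul_nonneg (mul_nonneg hV.1.le (sub_nonneg.2 hV.2.le))
    (hq.trans (h.le_deriv_log_odds_V ha hS hR hw t))

theorem deriv_U_le {Q t : ℝ} (hQ : odds (V t) ≤ Q) :
    U t * (1 - U t) * ((1 - U t) * (1 - V t) * uRate a (S t) (R t) (odds (U t)) (odds (V t))) ≤
      (1 + (a + Q / (2 * a)) / (1 - 1 / a)) *
        ((1 - U t) * (1 - V t) * qRate (S t) (R t) (odds (U t)) (odds (V t))) := by
  have hU := h.mem_U t
  have hp : 0 ≤ U t * (1 - U t) := mul_nonneg hU.1.le (sub_nonneg.2 hU.2.le)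
  have hp1 : U t * (1 - U t) ≤ 1 := by nlinarith [hU.1, hU.2]
  have hpu : U t * (1 - U t) ≤ odds (U t) := by
    rw [odds, le_div_iff₀ (sub_pos.2 hU.2)]
    nlinarith [mul_nonneg hU.1.le hp, hU.1, hU.2]
  have key := mul_uRate_le_mul_qRate ha (hS t) (hR t) (odds_pos hU).le (odds_pos (h.mem_V t)).le
    (hw t).le hp hp1 hpu hQ
  linear_combination mul_le_mul_of_nonneg_left key (h.timeChange_pos t).le

theorem exists_tendsto_U {v : ℝ} (hv : v ∈ Ioo 0 1) (hV : Tendsto V atTop (𝓝 v)) :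
    ∃ x, Tendsto U atTop (𝓝 x) := by
  have hq : Tendsto (fun t ↦ odds (V t)) atTop (𝓝 (odds v)) := tendsto_odds_comp hv.2.ne hV
  set N := 1 + (a + (odds v + 1) / (2 * a)) / (1 - 1 / a)
  refine exists_tendsto_atTop_of_eventually_deriv_le h.hasDerivAt_U_uRate
    (fun t ↦ (h.hasDerivAt_log_odds_V t).const_mul N) ?_
    ⟨0, forall_mem_range.2 fun t ↦ (h.mem_U t).1.le⟩ ((hq.log (odds_pos hv).ne').const_mul N)
  filter_upwards [hq.eventually_le_const (lt_add_one (odds v))] with t ht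
    using h.deriv_U_le ha hS hR hw ht

theorem tendsto_U_zero {v : ℝ} (hv : v ∈ Ioo 0 1) (hV : Tendsto V atTop (𝓝 v)) :
    Tendsto U atTop (𝓝 0) := by
  obtain ⟨x, hx⟩ := h.exists_tendsto_U ha hS hR hw hv hV
  have hq : Tendsto (fun t ↦ Real.log (odds (V t))) atTop (𝓝 (Real.log (odds v))) :=
    (tendsto_odds_comp hv.2.ne hV).log (odds_pos hv).ne'
  have hrate : (1 - 1 / a) * (x * (1 - v)) ≤ 0 :=
    nonpos_of_tendsto_of_eventually_le_deriv h.hasDerivAt_log_odds_V hq.isBoundedUnder_le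
      ((hx.mul (hV.const_sub 1)).const_mul _)
      (Eventually.of_forall (h.le_deriv_log_odds_V ha hS hR hw))
  have hx0 : 0 ≤ x := ge_of_tendsto' hx fun t ↦ (h.mem_U t).1.le
  have ha' : 0 < 1 - 1 / a := sub_pos.2 ((div_lt_one (by linarith)).2 ha)
  have hx0' : x ≤ 0 :=
    nonpos_of_mul_nonpos_left (nonpos_of_mul_nonpos_right hrate ha') (sub_pos.2 hv.2)
  rwa [le_antisymm hx0' hx0] at hx

theorem le_deriv_log_barrier {t : ℝ} (hG : 0 ≤ barrierSource a (S t) (R t) (odds (U t))) :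
    (1 - U t) * V t / (2 * a) - U t * (1 - V t) ≤
      (1 - U t) * (1 - V t) *
        (barrier a (odds (U t)) (odds (V t)) * barrierRate (S t) (R t) (odds (U t)) (odds (V t))
          + odds (V t) * barrierSource a (S t) (R t) (odds (U t)))
        / barrier a (odds (U t)) (odds (V t)) := by
  have hU : 1 - U t ≠ 0 := (sub_pos.2 (h.mem_U t).2).ne'
  have hV : 1 - V t ≠ 0 := (sub_pos.2 (h.mem_V t).2).ne'
  have hm := (h.timeChange_pos t).le
  have hq := (odds_pos (h.mem_V t)).le
  have hC := le_barrierRate (by linarith) (hS t) (hR t) (odds_pos (h.mem_U t)).le hq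
  calc (1 - U t) * V t / (2 * a) - U t * (1 - V t)
      = (1 - U t) * (1 - V t) * (odds (V t) / (2 * a) - odds (U t)) := by
        unfold odds; field_simp
    _ ≤ (1 - U t) * (1 - V t) * barrierRate (S t) (R t) (odds (U t)) (odds (V t)) := by gcongr
    _ ≤ _ := by
      rw [le_div_iff₀ (hw t)]
      linear_combination mul_nonneg hm (mul_nonneg hq hG)

variable (hG : ∀ t, odds (U t) ≤ a → 0 ≤ barrierSource a (S t) (R t) (odds (U t)))
include hG

theorem not_tendsto_V {v : ℝ} (hv : v ∈ Ioo 0 1) : ¬ Tendsto V atTop (𝓝 v) := by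
  intro hV
  have hU := h.tendsto_U_zero ha hS hR hw hv hV
  have hu : Tendsto (fun t ↦ odds (U t)) atTop (𝓝 0) := by
    simpa only [odds_zero] using tendsto_odds_comp zero_ne_one hU
  have hbdd : IsBoundedUnder (· ≤ ·) atTop
      (fun t ↦ Real.log (barrier a (odds (U t)) (odds (V t)))) :=
    ((hu.add ((tendsto_odds_comp hv.2.ne hV).div_const 2)).sub_const a).isBoundedUnder_le.mono_le
      (Eventually.of_forall fun t ↦ Real.log_le_self (hw t).le)
  have hrate : Tendsto (fun t ↦ (1 - U t) * V t / (2 * a) - U t * (1 - V t)) atTop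
      (𝓝 (v / (2 * a))) := by
    simpa using (((hU.const_sub 1).mul hV).div_const (2 * a)).sub (hU.mul (hV.const_sub 1))
  have hnonpos : v / (2 * a) ≤ 0 := by
    refine nonpos_of_tendsto_of_eventually_le_deriv
      (fun t ↦ (h.hasDerivAt_barrier t).log (hw t).ne') hbdd hrate ?_
    filter_upwards [hu.eventually_le_const (by linarith : 0 < a)] with t ht
      using h.le_deriv_log_barrier ha hS hR hw (hG t ht)
  exact hnonpos.not_gt (div_pos hv.1 (by linarith))

theorem tendsto_V_one : Tendsto V atTop (𝓝 1) := by
  have hmono := h.monotone_V ha hS hR hw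
  have hbdd : BddAbove (range V) := ⟨1, forall_mem_range.2 fun t ↦ (h.mem_V t).2.le⟩
  have hlim := tendsto_atTop_ciSup hmono hbdd
  have hpos : 0 < ⨆ t, V t := (h.mem_V 0).1.trans_le (le_ciSup hbdd 0)
  rcases (ciSup_le fun t ↦ (h.mem_V t).2.le).eq_or_lt with heq | hlt
  · rwa [heq] at hlim
  · exact absurd hlim (h.not_tendsto_V ha hS hR hw hG ⟨hpos, hlt⟩)

end AboveBarrier

end PlanarOrbit

/-- An interior orbit of the Einstein–Vlasov dynamical system. The functions `σ`, `σ'`, `F` of the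
radial variable are evaluated at `η = E λ`, and `Ω = ω / (1 + ω)` along the orbit. -/
structure EinsteinVlasovOrbit (l : ℝ) (σ σ' ω F U V E Ω : ℝ → ℝ) : Prop where
  Ω_eq : ∀ t, Ω t = ω (E t) / (1 + ω (E t))
  mem_U : ∀ t, U t ∈ Ioo (0 : ℝ) 1
  mem_V : ∀ t, V t ∈ Ioo (0 : ℝ) 1
  E_pos : ∀ t, 0 < E t
  hasDerivAt_U : ∀ t, HasDerivAt U
    (U t * (1 - U t) * ((3 + 2 * l - (4 + 2 * l) * U t) * (1 - V t)
      - (1 + σ (E t) - σ' (E t)) * ((1 - U t + σ (E t) * U t) * V t))) t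
  hasDerivAt_V : ∀ t, HasDerivAt V
    (V t * (1 - V t) * ((2 * U t - 1) * (1 - V t + 2 * σ (E t) * V t)
      + σ' (E t) * ((1 - U t + σ (E t) * U t) * V t))) t
  hasDerivAt_Ω : ∀ t, HasDerivAt Ω
    (-(Ω t * (1 - Ω t) * F (E t) * ((1 - U t + σ (E t) * U t) * V t))) t

theorem strictMonoOn_div_one_add {ω : ℝ → ℝ} {s : Set ℝ} (hpos : ∀ η ∈ s, 0 ≤ ω η)
    (hmono : StrictMonoOn ω s) : StrictMonoOn (fun η ↦ ω η / (1 + ω η)) s := by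
  intro x hx y hy hxy
  have hx0 := hpos x hx
  have hy0 := hpos y hy
  rw [div_lt_div_iff₀ (by linarith) (by linarith)]
  linarith [hmono hx hy hxy]

namespace EinsteinVlasovOrbit

variable {l : ℝ} {σ σ' ω F U V E Ω : ℝ → ℝ} (γ : EinsteinVlasovOrbit l σ σ' ω F U V E Ω)
include γ

theorem planarOrbit :
    PlanarOrbit (3 + 2 * l) (fun t ↦ σ (E t)) (fun t ↦ σ' (E t)) U V where
  mem_U := γ.mem_U
  mem_V := γ.mem_V
  hasDerivAt_U t := by
    convert γ.hasDerivAt_U t using 5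
    ring
  hasDerivAt_V := γ.hasDerivAt_V

theorem tendsto_Ω_zero {f : Filter ℝ} (hω0 : Tendsto ω (𝓝[>] 0) (𝓝 0))
    (hE : Tendsto E f (𝓝 0)) : Tendsto Ω f (𝓝 0) := by
  have hω : Tendsto (fun t ↦ ω (E t)) f (𝓝 0) :=
    hω0.comp (tendsto_nhdsWithin_iff.2 ⟨hE, Eventually.of_forall γ.E_pos⟩)
  have hlim := hω.div (hω.const_add 1) (by norm_num)
  rw [zero_div] at hlim
  exact hlim.congr fun t ↦ (γ.Ω_eq t).symm

theorem min_one_σ_le (t : ℝ) : min 1 (σ (E t)) ≤ 1 - U t + σ (E t) * U t := by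
  simpa [mul_comm] using Convex.min_le_combo 1 (σ (E t)) (sub_nonneg.2 (γ.mem_U t).2.le)
    (γ.mem_U t).1.le (sub_add_cancel 1 (U t))

theorem barrier_pos {k : ℝ} (hl : -1 < l) (hk : 2 ≤ k) (hlk : 3 + 2 * l + 1 / 2 ≤ k)
    (hσ : ∀ η, 0 < η → 0 < σ η) (hσcont : ContinuousOn σ (Ioi 0))
    (hσ'cont : ContinuousOn σ' (Ioi 0))
    (hσ' : ∀ t, 1 / (2 * (3 + 2 * l)) + k * σ (E t) ≤ σ' (E t))
    (hE : ∃ e > 0, Tendsto E atBot (𝓝 e))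
    (hU : Tendsto U atBot (𝓝 1) ∨ Tendsto U atBot (𝓝 ((3 + 2 * l) / (4 + 2 * l))))
    (hV : Tendsto V atBot (𝓝 0)) (t : ℝ) : 0 < barrier (3 + 2 * l) (odds (U t)) (odds (V t)) := by
  obtain ⟨e, he, hElim⟩ := hE
  have ha : 1 < 3 + 2 * l := by linarith
  have hS t : 0 < σ (E t) := hσ _ (γ.E_pos t)
  have hSlim := (hσcont.continuousAt (Ioi_mem_nhds he)).tendsto.comp hElim
  have hRlim := (hσ'cont.continuousAt (Ioi_mem_nhds he)).tendsto.comp hElim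
  have h := γ.planarOrbit
  rw [show 4 + 2 * l = 3 + 2 * l + 1 by ring] at hU
  exact h.barrier_pos ha hk hlk hS hσ' (hU.elim
    (h.frequently_barrier_nonneg_of_tendsto_U_one (by linarith)) fun hU ↦
      h.frequently_barrier_nonneg_of_tendsto_U_div ha hk hlk hS hσ' hSlim hRlim hU hV) t

variable (hωpos : ∀ η, 0 < η → 0 < ω η)
include hωpos

theorem mem_Ω (t : ℝ) : Ω t ∈ Ioo (0 : ℝ) 1 := by
  have hω := hωpos _ (γ.E_pos t)
  rw [γ.Ω_eq]
  exact ⟨by positivity, (div_lt_one (by linarith)).2 (by linarith)⟩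

theorem le_neg_deriv_Ω {t c v : ℝ} (hσ : 0 ≤ σ (E t)) (hc : 0 ≤ c) (hF : c ≤ F (E t))
    (hv : 0 ≤ v) (hV : v ≤ V t) : Ω t * (1 - Ω t) * c * (min 1 (σ (E t)) * v) ≤
      Ω t * (1 - Ω t) * F (E t) * ((1 - U t + σ (E t) * U t) * V t) := by
  have hΩ := γ.mem_Ω hωpos t
  have hΩ' : 0 ≤ Ω t * (1 - Ω t) := mul_nonneg hΩ.1.le (sub_nonneg.2 hΩ.2.le)
  have hmin : 0 ≤ min 1 (σ (E t)) := le_min zero_le_one hσ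
  exact mul_le_mul (mul_le_mul_of_nonneg_left hF hΩ')
    (mul_le_mul (γ.min_one_σ_le t) hV hv (hmin.trans (γ.min_one_σ_le t)))
    (mul_nonneg hmin hv) (mul_nonneg hΩ' (hc.trans hF))

theorem strictAnti_Ω (hσ : ∀ η, 0 < η → 0 < σ η) (hF : ∀ η, 0 < η → 0 < F η) : StrictAnti Ω := by
  refine strictAnti_of_hasDerivAt_neg γ.hasDerivAt_Ω fun t ↦ neg_neg_of_pos ?_
  have hΩ := γ.mem_Ω hωpos t
  have hH := (lt_min one_pos (hσ _ (γ.E_pos t))).trans_le (γ.min_one_σ_le t)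
  exact mul_pos (mul_pos (mul_pos hΩ.1 (sub_pos.2 hΩ.2)) (hF _ (γ.E_pos t)))
    (mul_pos hH (γ.mem_V t).1)

variable (hωmono : StrictMonoOn ω (Ioi 0))
include hωmono

theorem Ω_lt_iff {η : ℝ} (hη : 0 < η) (t : ℝ) : Ω t < ω η / (1 + ω η) ↔ E t < η := by
  rw [γ.Ω_eq]
  exact (strictMonoOn_div_one_add (fun η hη ↦ (hωpos η hη).le) hωmono).lt_iff_lt (γ.E_pos t) hη

variable (hΩ : StrictAnti Ω)
include hΩ

theorem antitone_E : Antitone E := by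
  refine StrictAnti.antitone fun s t hst ↦ ?_
  rw [← γ.Ω_lt_iff hωpos hωmono (γ.E_pos s), ← γ.Ω_eq]
  exact hΩ hst

theorem E_lt_of_tendsto_atBot {η Ω₀ : ℝ} (hη : 0 < η) (hΩ₀ : Ω₀ ≤ ω η / (1 + ω η))
    (hlim : Tendsto Ω atBot (𝓝 Ω₀)) (t : ℝ) : E t < η := by
  rw [← γ.Ω_lt_iff hωpos hωmono hη]
  calc Ω t < Ω (t - 1) := hΩ (sub_one_lt t)
    _ ≤ Ω₀ := hΩ.antitone.ge_of_tendsto hlim (t - 1)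
    _ ≤ _ := hΩ₀

theorem exists_tendsto_E_atBot (hbdd : BddAbove (range E)) :
    ∃ e > 0, Tendsto E atBot (𝓝 e) :=
  ⟨⨆ t, E t, (γ.E_pos 0).trans_le (le_ciSup hbdd 0),
    tendsto_atBot_ciSup (γ.antitone_E hωpos hωmono hΩ) hbdd⟩

theorem tendsto_E_atTop (hσ : ∀ η, 0 < η → 0 < σ η) (hσcont : ContinuousOn σ (Ioi 0)) {Flo : ℝ}
    (hFlo : 0 < Flo) (hF : ∀ η, 0 < η → Flo ≤ F η) {v : ℝ} (hv : 0 < v)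
    (hV : ∀ᶠ t in atTop, v ≤ V t) : Tendsto E atTop (𝓝 0) := by
  have hbddE : BddBelow (range E) := ⟨0, forall_mem_range.2 fun t ↦ (γ.E_pos t).le⟩
  have hElim := tendsto_atTop_ciInf (γ.antitone_E hωpos hωmono hΩ) hbddE
  have hbddΩ : BddBelow (range Ω) := ⟨0, forall_mem_range.2 fun t ↦ (γ.mem_Ω hωpos t).1.le⟩
  have hΩlim := tendsto_atTop_ciInf hΩ.antitone hbddΩ
  set e := ⨅ t, E t
  set L := ⨅ t, Ω t
  have he0 : 0 ≤ e := le_ciInf fun t ↦ (γ.E_pos t).le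
  rcases he0.eq_or_lt with he | he
  · rwa [← he] at hElim
  have hLpos : 0 < L := by
    have hω := hωpos e he
    refine lt_of_lt_of_le (by positivity : 0 < ω e / (1 + ω e)) (le_ciInf fun t ↦ ?_)
    exact not_lt.1 fun ht ↦ ((γ.Ω_lt_iff hωpos hωmono he t).1 ht).not_ge (ciInf_le hbddE t)
  have hL1 : L < 1 := (ciInf_le hbddΩ 0).trans_lt (γ.mem_Ω hωpos 0).2
  have hrate : Tendsto (fun t ↦ Ω t * (1 - Ω t) * Flo * (min 1 (σ (E t)) * v)) atTop
      (𝓝 (L * (1 - L) * Flo * (min 1 (σ e) * v))) :=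
    ((hΩlim.mul (hΩlim.const_sub 1)).mul_const Flo).mul ((tendsto_const_nhds.min
      ((hσcont.continuousAt (Ioi_mem_nhds he)).tendsto.comp hElim)).mul_const v)
  refine absurd (nonpos_of_tendsto_of_eventually_le_deriv (fun t ↦ (γ.hasDerivAt_Ω t).neg)
    hΩlim.neg.isBoundedUnder_le hrate ?_) (not_le.2 ?_)
  · filter_upwards [hV] with t ht
    rw [neg_neg]
    exact γ.le_neg_deriv_Ω hωpos (hσ _ (γ.E_pos t)).le hFlo.le (hF _ (γ.E_pos t)) hv.le ht
  · exact mul_pos (mul_pos (mul_pos hLpos (sub_pos.2 hL1)) hFlo)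
      (mul_pos (lt_min one_pos (hσ e he)) hv)

end EinsteinVlasovOrbit

theorem stmt4_general {l k : ℝ} (hl : -1 < l) (hk : 2 ≤ k) (hlk : 3 + 2 * l + 1 / 2 ≤ k)
    {σ σ' ω F U V E Ω : ℝ → ℝ} (hσderiv : ∀ η, 0 < η → HasDerivAt σ (σ' η) η)
    (hσ'cont : ContinuousOn σ' (Ioi 0)) (hσpos : ∀ η, 0 < η → 0 < σ η)
    (hωpos : ∀ η, 0 < η → 0 < ω η) (hωmono : StrictMonoOn ω (Ioi 0))
    (hω0 : Tendsto ω (𝓝[>] 0) (𝓝 0)) {Flo : ℝ} (hFlo : 0 < Flo) (hF : ∀ η, 0 < η → Flo ≤ F η)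
    (γ : EinsteinVlasovOrbit l σ σ' ω F U V E Ω) {ηch : ℝ} (hηch : 0 < ηch)
    (hmain : ∀ η, 0 < η → η ≤ ηch → 1 / (2 * (3 + 2 * l)) + k * σ η ≤ σ' η) {Ω₀ : ℝ}
    (hΩ₀ : Ω₀ ≤ ω ηch / (1 + ω ηch))
    (halpha : Tendsto (fun t ↦ (U t, V t, Ω t)) atBot (𝓝 (1, 0, Ω₀)) ∨
      Tendsto (fun t ↦ (U t, V t, Ω t)) atBot (𝓝 ((3 + 2 * l) / (4 + 2 * l), 0, Ω₀))) :
    Tendsto Ω atTop (𝓝 0) ∧ Tendsto V atTop (𝓝 1) := by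
  have ha : 1 < 3 + 2 * l := by linarith
  have hS t : 0 < σ (E t) := hσpos _ (γ.E_pos t)
  have hσcont : ContinuousOn σ (Ioi 0) := fun η hη ↦ (hσderiv η hη).continuousAt.continuousWithinAt
  have hΩ : StrictAnti Ω := γ.strictAnti_Ω hωpos hσpos fun η hη ↦ hFlo.trans_le (hF η hη)
  obtain ⟨hU, hV, hΩlim⟩ :
      (Tendsto U atBot (𝓝 1) ∨ Tendsto U atBot (𝓝 ((3 + 2 * l) / (4 + 2 * l)))) ∧
        Tendsto V atBot (𝓝 0) ∧ Tendsto Ω atBot (𝓝 Ω₀) := by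
    simp only [Prod.tendsto_iff] at halpha
    tauto
  have hEch := γ.E_lt_of_tendsto_atBot hωpos hωmono hΩ hηch hΩ₀ hΩlim
  have hR t : 1 / (2 * (3 + 2 * l)) + k * σ (E t) ≤ σ' (E t) := hmain _ (γ.E_pos t) (hEch t).le
  have hR2 t : 1 / (2 * (3 + 2 * l)) + 2 * σ (E t) ≤ σ' (E t) :=
    (add_le_add_right (mul_le_mul_of_nonneg_right hk (hS t).le) _).trans (hR t)
  have hEbot := γ.exists_tendsto_E_atBot hωpos hωmono hΩ
    ⟨ηch, forall_mem_range.2 fun t ↦ (hEch t).le⟩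
  have hw := γ.barrier_pos hl hk hlk hσpos hσcont hσ'cont hR hEbot hU hV
  have hVmono := γ.planarOrbit.monotone_V ha (fun t ↦ (hS t).le) hR2 hw
  have hE : Tendsto E atTop (𝓝 0) := γ.tendsto_E_atTop hωpos hωmono hΩ hσpos hσcont hFlo hF
    (γ.mem_V 0).1 ((eventually_ge_atTop 0).mono fun t ht ↦ hVmono ht)
  refine ⟨γ.tendsto_Ω_zero hω0 hE,
    γ.planarOrbit.tendsto_V_one ha (fun t ↦ (hS t).le) hR2 hw fun t ht ↦ ?_⟩
  exact (barrierSource_pos ha hk hlk (hS t) (hR t) (odds_pos (γ.mem_U t)) ht).le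

/-- With `k = 3+2l+1/2` if `l ≥ -3/4`, `k = 2` otherwise: if `σ' ≥ 1/(2(3+2l)) + kσ` on `(0,η̌]`, then every interior orbit whose α-limit is a point `(1,0,Ω₀)` or `((3+2l)/(4+2l),0,Ω₀)` with `Ω₀ ≤ Ω̌` satisfies `Ω → 0` and `V → 1` as `λ → +∞`. -/
theorem stmt4
    (l : ℝ) (hl : -1 < l)
    (σ σ' : ℝ → ℝ)
    (hσderiv : ∀ η : ℝ, 0 < η → HasDerivAt σ (σ' η) η)
    (hσ'cont : ContinuousOn σ' (Ioi 0))
    (hσrange : ∀ η : ℝ, 0 < η → σ η ∈ Ioo 0 (1 / (3 + 2 * l)))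
    (hσ0 : Tendsto σ (nhdsWithin 0 (Ioi 0)) (nhds 0))
    (k₁ k₂ : ℝ) (hk₁ : 0 < k₁) (hk₁₂ : k₁ < k₂)
    (hσ'near : ∃ η₀ > (0:ℝ), ∀ η ∈ Ioo (0:ℝ) η₀, σ' η ∈ Ioo k₁ k₂)
    (ω ω' : ℝ → ℝ)
    (hωsmooth : ContDiffOn ℝ (⊤ : ℕ∞) ω (Ioi 0))
    (hωderiv : ∀ η : ℝ, 0 < η → HasDerivAt ω (ω' η) η)
    (hωpos : ∀ η : ℝ, 0 < η → 0 < ω η)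
    (hωmono : StrictMonoOn ω (Ioi 0))
    (hω0 : Tendsto ω (nhdsWithin 0 (Ioi 0)) (nhds 0))
    (F : ℝ → ℝ) (hFdef : ∀ η : ℝ, 0 < η → F η = σ η * (ω' η / ω η))
    (Flo Fhi : ℝ) (hFlo : 0 < Flo)
    (hFbounds : ∀ η : ℝ, 0 < η → F η ∈ Icc Flo Fhi)
    (U V E Ω : ℝ → ℝ)
    (hΩdef : ∀ t : ℝ, Ω t = ω (E t) / (1 + ω (E t)))
    (hU : ∀ t : ℝ, U t ∈ Ioo (0:ℝ) 1) (hV : ∀ t : ℝ, V t ∈ Ioo (0:ℝ) 1)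
    (hE : ∀ t : ℝ, 0 < E t) (hEcont : Continuous E)
    (hUode : ∀ t : ℝ, HasDerivAt U
      (U t * (1 - U t) * ((3 + 2 * l - (4 + 2 * l) * U t) * (1 - V t)
        - (1 + σ (E t) - σ' (E t)) * ((1 - U t + σ (E t) * U t) * V t))) t)
    (hVode : ∀ t : ℝ, HasDerivAt V
      (V t * (1 - V t) * ((2 * U t - 1) * (1 - V t + 2 * σ (E t) * V t)
        + σ' (E t) * ((1 - U t + σ (E t) * U t) * V t))) t)
    (hΩode : ∀ t : ℝ, HasDerivAt Ω
      (-(Ω t * (1 - Ω t) * F (E t) * ((1 - U t + σ (E t) * U t) * V t))) t)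
    (k : ℝ) (hk : k = if -(3/4) ≤ l then 3 + 2 * l + 1 / 2 else 2)
    (ηch : ℝ) (hηch : 0 < ηch)
    (hmain : ∀ η : ℝ, 0 < η → η ≤ ηch →
      1 / (2 * (3 + 2 * l)) + k * σ η ≤ σ' η)
    (Ω₀ : ℝ) (hΩ₀ : Ω₀ ≤ ω ηch / (1 + ω ηch))
    (halpha : Tendsto (fun t => (U t, V t, Ω t)) atBot (nhds ((1:ℝ), (0:ℝ), Ω₀)) ∨
      Tendsto (fun t => (U t, V t, Ω t)) atBot
        (nhds ((3 + 2 * l) / (4 + 2 * l), (0:ℝ), Ω₀))) :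
    Tendsto Ω atTop (nhds 0) ∧ Tendsto V atTop (nhds 1) := by
  have hk2 : 2 ≤ k := by rw [hk]; split_ifs <;> linarith
  have hlk : 3 + 2 * l + 1 / 2 ≤ k := by rw [hk]; split_ifs <;> linarith
  exact stmt4_general hl hk2 hlk hσderiv hσ'cont (fun η hη ↦ (hσrange η hη).1) hωpos hωmono hω0
    hFlo (fun η hη ↦ (hFbounds η hη).1) ⟨hΩdef, hU, hV, hE, hUode, hVode, hΩode⟩ hηch hmain hΩ₀
    halpha
end

section
/- Assume in addition that σ', regarded as a function of Ω, extends to a C¹ function on [0,ε) for some ε > 0, and that σ'₀ := lim_{η→0⁺} σ'(η) satisfies σ'₀ ≥ 1/(4+2l). Then every interior orbit of the Einstein–Vlasov dynamical system satisfies Ω(λ) → 0 and V(λ) → 1 as λ → +∞; that is, the ω-limit set of every interior orbit lies in {Ω = 0} ∩ {V = 1}. -/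
open Filter Set

/-!
With `a = 3 + 2l` and the radius `η` followed along the orbit, `η' = -σ(η) H`, so `η` decreases to
some `m ≥ 0`. If `m > 0` then `H`, hence `V`, is integrable in time and `V → 0`; but for small `V`
the `U`-equation pushes `U` above a value greater than `1/2`, where the `V`-equation makes `V`
grow. Hence `η → 0`.

In logit coordinates the combination `logit U + a logit V` cancels the terms in `H` up to
`((a + 1) σ' - 1) H`, which `σ' ≥ 1/(4 + 2l) - C Ω` bounds below by `-(a + 1) C Ω H`; this and the
remaining `O(σ H)` error are controlled by time derivatives of convergent quantities. The corrected
combination `W` satisfies `W' ≥ (a - 1) U (1 - V) ≥ 0`. If `W` converges, then `U (1 - V) → 0`,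
and `V → 1` because `U → 0` with `V` away from `1` would force `W → -∞`. If `W → ∞`, then `V` away
from `1` forces `U` close to `1`, where `U` decreases at a definite logit rate while `V`
increases; so `V` must eventually exceed every `v < 1`, and cannot fall below it again.
-/

open scoped Topology

lemma tendsto_atTop_or_exists_tendsto_of_deriv_nonneg {f f' : ℝ → ℝ}
    (hf : ∀ t, HasDerivAt f (f' t) t) (hf' : ∀ᶠ t in atTop, 0 ≤ f' t) :
    Tendsto f atTop atTop ∨ ∃ L, Tendsto f atTop (𝓝 L) := by
  obtain ⟨T, hT⟩ := eventually_atTop.1 hf'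
  have hmono : MonotoneOn f (Ici T) :=
    monotoneOn_of_hasDerivWithinAt_nonneg (convex_Ici T)
      (fun t _ => (hf t).continuousAt.continuousWithinAt)
      (fun t _ => (hf t).hasDerivWithinAt) (fun t ht => hT t (interior_subset ht))
  have hmax : Monotone fun t => f (max t T) := fun s t hst =>
    hmono (le_max_right s T) (le_max_right t T) (max_le_max_right T hst)
  have heq : (fun t => f (max t T)) =ᶠ[atTop] f := by
    filter_upwards [eventually_ge_atTop T] with t ht
    rw [max_eq_left ht]
  exact (tendsto_atTop_of_monotone hmax).imp (·.congr' heq) fun ⟨L, hL⟩ => ⟨L, hL.congr' heq⟩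

lemma tendsto_atTop_of_le_deriv {f f' : ℝ → ℝ} {c : ℝ} (hc : 0 < c)
    (hf : ∀ t, HasDerivAt f (f' t) t) (hf' : ∀ᶠ t in atTop, c ≤ f' t) :
    Tendsto f atTop atTop := by
  have hsub : ∀ t, HasDerivAt (fun t => f t - c * t) (f' t - c) t := fun t =>
    ((hf t).sub ((hasDerivAt_id' t).const_mul c)).congr_deriv (by rw [mul_one])
  have hlin : Tendsto (fun t : ℝ => c * t) atTop atTop := tendsto_id.const_mul_atTop hc
  rcases tendsto_atTop_or_exists_tendsto_of_deriv_nonneg hsub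
    (hf'.mono fun t ht => sub_nonneg.2 ht) with h | ⟨L, h⟩
  · simpa using h.atTop_add_atTop hlin
  · simpa using h.add_atTop hlin

-- A Barbalat-type statement: `f` is dominated by the integrable `g'`, and so is `f'`.
lemma tendsto_zero_of_abs_deriv_le_of_le_deriv {f f' g g' : ℝ → ℝ} {c K L : ℝ} (hc : 0 < c)
    (hf : ∀ t, HasDerivAt f (f' t) t) (hg : ∀ t, HasDerivAt g (g' t) t)
    (hf0 : ∀ᶠ t in atTop, 0 ≤ f t) (hf' : ∀ᶠ t in atTop, |f' t| ≤ K * f t)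
    (hfg : ∀ᶠ t in atTop, c * f t ≤ g' t) (hgL : Tendsto g atTop (𝓝 L)) :
    Tendsto f atTop (𝓝 0) := by
  obtain ⟨T, hT⟩ := eventually_atTop.1 (hf0.and (hf'.and hfg))
  have hT' : ∀ᵐ t ∂MeasureTheory.volume.restrict (Ioi T),
      0 ≤ f t ∧ |f' t| ≤ K * f t ∧ c * f t ≤ g' t :=
    (MeasureTheory.ae_restrict_mem measurableSet_Ioi).mono fun t ht => hT t (le_of_lt ht)
  have hg'int : MeasureTheory.IntegrableOn g' (Ioi T) :=
    MeasureTheory.integrableOn_Ioi_deriv_of_nonneg' (fun t _ => hg t)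
      (fun t ht => (mul_nonneg hc.le (hT t (le_of_lt ht)).1).trans (hT t (le_of_lt ht)).2.2) hgL
  have hfmeas : Measurable f :=
    (continuous_iff_continuousAt.2 fun t => (hf t).continuousAt).measurable
  have hf'meas : Measurable f' := by
    rw [← funext fun t => (hf t).deriv]
    exact measurable_deriv f
  have hfint : MeasureTheory.IntegrableOn f (Ioi T) := by
    refine (hg'int.const_mul c⁻¹).mono' hfmeas.aestronglyMeasurable (hT'.mono fun t ht => ?_)
    rw [Real.norm_of_nonneg ht.1, le_inv_mul_iff₀ hc]
    exact ht.2.2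
  have hf'int : MeasureTheory.IntegrableOn f' (Ioi T) :=
    (hfint.const_mul K).mono' hf'meas.aestronglyMeasurable (hT'.mono fun t ht => ht.2.1)
  exact MeasureTheory.tendsto_zero_of_hasDerivAt_of_integrableOn_Ioi (fun t _ => hf t) hf'int hfint

lemma eventually_le_of_frequently_le_of_deriv_pos {f f' : ℝ → ℝ} {M : ℝ}
    (hf : ∀ t, HasDerivAt f (f' t) t) (hfreq : ∃ᶠ t in atTop, M ≤ f t)
    (hpos : ∀ᶠ t in atTop, f t = M → 0 < f' t) : ∀ᶠ t in atTop, M ≤ f t := by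
  obtain ⟨T, hT⟩ := eventually_atTop.1 hpos
  obtain ⟨t₁, ht₁, hM⟩ := frequently_atTop.1 hfreq T
  filter_upwards [eventually_ge_atTop t₁] with t ht
  refine image_le_of_deriv_right_lt_deriv_boundary' continuousOn_const
    (fun r _ => hasDerivWithinAt_const r _ M) hM
    (fun r _ => (hf r).continuousAt.continuousWithinAt) (fun r _ => (hf r).hasDerivWithinAt)
    (fun r hr hr' => hT r (ht₁.trans hr.1) hr'.symm) (right_mem_Icc.2 ht)

lemma isBigO_sub_of_differentiableWithinAt_of_tendsto {α : Type*} {F : Filter α} [F.NeBot]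
    {s : ℝ → ℝ} {D : Set ℝ} {x₀ y₀ : ℝ} {q p : α → ℝ} (hs : DifferentiableWithinAt ℝ s D x₀)
    (hq : Tendsto q F (𝓝[D] x₀)) (hsq : s ∘ q =ᶠ[F] p) (hp : Tendsto p F (𝓝 y₀)) :
    (fun x => p x - y₀) =O[F] fun x => q x - x₀ := by
  have hy₀ : s x₀ = y₀ :=
    tendsto_nhds_unique ((hs.continuousWithinAt.tendsto.comp hq).congr' hsq) hp
  refine (hs.isBigO_sub.comp_tendsto hq).congr' ?_ EventuallyEq.rfl
  filter_upwards [hsq] with x hx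
  simp only [Function.comp_apply] at hx ⊢
  rw [hx, hy₀]

/-- The logit `log (u / (1 - u))` of `u ∈ (0, 1)`, the inverse of `Real.sigmoid`. It straightens
equations of the form `u' = u (1 - u) D` to `(logit u)' = D`. -/
noncomputable def logit (u : ℝ) : ℝ := Real.log u - Real.log (1 - u)

lemma sigmoid_logit {u : ℝ} (hu : u ∈ Ioo (0 : ℝ) 1) : Real.sigmoid (logit u) = u := by
  have hu1 : 0 < 1 - u := sub_pos.2 hu.2
  have hu0 : u ≠ 0 := hu.1.ne'
  rw [Real.sigmoid_def, logit, neg_sub, Real.exp_sub, Real.exp_log hu.1, Real.exp_log hu1]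
  field_simp
  ring

lemma logit_lt_logit_iff {u v : ℝ} (hu : u ∈ Ioo (0 : ℝ) 1) (hv : v ∈ Ioo (0 : ℝ) 1) :
    logit u < logit v ↔ u < v := by
  rw [← Real.sigmoid_lt_iff, sigmoid_logit hu, sigmoid_logit hv]

lemma sigmoid_le_of_le_logit {x u : ℝ} (hu : u ∈ Ioo (0 : ℝ) 1) (hx : x ≤ logit u) :
    Real.sigmoid x ≤ u := by
  simpa only [sigmoid_logit hu] using Real.sigmoid_le hx

lemma div_one_add_mem_Ioo {w : ℝ} (hw : 0 < w) : w / (1 + w) ∈ Ioo (0 : ℝ) 1 :=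
  ⟨by positivity, (div_lt_one (by positivity)).2 (lt_one_add w)⟩

lemma logit_div_one_add {w : ℝ} (hw : 0 < w) : logit (w / (1 + w)) = Real.log w := by
  have hw1 : 0 < 1 + w := by positivity
  have hsub : 1 - w / (1 + w) = (1 + w)⁻¹ := by field_simp; ring
  rw [logit, hsub, Real.log_div hw.ne' hw1.ne', Real.log_inv]
  ring

/-- `u` takes values in `(0, 1)` and solves the logistic equation `u' = u (1 - u) D` with
time-dependent rate `D`. All three equations of the Einstein–Vlasov system have this form. -/
structure IsLogistic (D u : ℝ → ℝ) : Prop where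
  mem_Ioo : ∀ t, u t ∈ Ioo (0 : ℝ) 1
  hasDerivAt : ∀ t, HasDerivAt u (u t * (1 - u t) * D t) t

namespace IsLogistic

variable {D u : ℝ → ℝ} {c θ : ℝ}

lemma one_sub (h : IsLogistic D u) : IsLogistic (fun t => -D t) (fun t => 1 - u t) where
  mem_Ioo t := ⟨sub_pos.2 (h.mem_Ioo t).2, sub_lt_self 1 (h.mem_Ioo t).1⟩
  hasDerivAt t := ((h.hasDerivAt t).const_sub 1).congr_deriv (by ring)

lemma hasDerivAt_log_one_sub (h : IsLogistic D u) (t : ℝ) :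
    HasDerivAt (fun t => Real.log (1 - u t)) (-(u t * D t)) t := by
  have hu1 : 1 - u t ≠ 0 := (sub_pos.2 (h.mem_Ioo t).2).ne'
  refine (((h.hasDerivAt t).const_sub 1).log hu1).congr_deriv ?_
  field_simp

lemma hasDerivAt_logit (h : IsLogistic D u) (t : ℝ) :
    HasDerivAt (fun t => logit (u t)) (D t) t := by
  have hlog : HasDerivAt (fun t => Real.log (u t)) ((1 - u t) * D t) t := by
    simpa using h.one_sub.hasDerivAt_log_one_sub t
  exact (hlog.sub (h.hasDerivAt_log_one_sub t)).congr_deriv (by ring)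

lemma hasDerivAt_of_eq_div_one_add {w E : ℝ → ℝ} {w' t : ℝ} (h : IsLogistic D u)
    (hu : ∀ t, u t = w (E t) / (1 + w (E t))) (hw : ∀ t, 0 < w (E t)) (hE : ContinuousAt E t)
    (hw' : HasDerivAt w w' (E t)) (hw'0 : w' ≠ 0) :
    HasDerivAt E (D t / (w' / w (E t))) t := by
  refine HasDerivAt.of_comp_left hE (hw'.log (hw t).ne') (h.hasDerivAt_logit t)
    (div_ne_zero hw'0 (hw t).ne') (Eventually.of_forall fun r => ?_)
  simp only [Function.comp_apply]
  rw [hu, logit_div_one_add (hw r)]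

lemma tendsto_one_of_le_rate (h : IsLogistic D u) (hc : 0 < c) (hD : ∀ᶠ t in atTop, c ≤ D t) :
    Tendsto u atTop (𝓝 1) := by
  have hlogit : Tendsto (fun t => logit (u t)) atTop atTop :=
    tendsto_atTop_of_le_deriv hc h.hasDerivAt_logit hD
  exact (Real.tendsto_sigmoid_atTop.comp hlogit).congr fun t => sigmoid_logit (h.mem_Ioo t)

lemma eventually_le_of_frequently_le (h : IsLogistic D u) (hfreq : ∃ᶠ t in atTop, θ ≤ u t)
    (hD : ∀ᶠ t in atTop, u t = θ → 0 < D t) : ∀ᶠ t in atTop, θ ≤ u t := by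
  refine eventually_le_of_frequently_le_of_deriv_pos h.hasDerivAt hfreq (hD.mono fun t ht htθ => ?_)
  exact mul_pos (mul_pos (h.mem_Ioo t).1 (sub_pos.2 (h.mem_Ioo t).2)) (ht htθ)

lemma eventually_le_of_le_rate (h : IsLogistic D u) (hθ : θ < 1) (hc : 0 < c)
    (hD : ∀ᶠ t in atTop, u t ≤ θ → c ≤ D t) : ∀ᶠ t in atTop, θ ≤ u t := by
  refine h.eventually_le_of_frequently_le (fun hlt => ?_)
    (hD.mono fun t ht htθ => hc.trans_le (ht htθ.le))
  have hlim : Tendsto u atTop (𝓝 1) :=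
    h.tendsto_one_of_le_rate hc (hD.mp (hlt.mono fun t ht hD => hD (not_le.1 ht).le))
  obtain ⟨t, ht, ht'⟩ := (hlt.and (hlim.eventually_const_lt hθ)).exists
  exact ht ht'.le

lemma tendsto_one_of_forall_eventually_le (h : IsLogistic D u)
    (hu : ∀ b ∈ Ioo (0 : ℝ) 1, ∀ᶠ t in atTop, b ≤ u t) : Tendsto u atTop (𝓝 1) := by
  refine tendsto_order.2 ⟨fun b hb => ?_, fun b hb =>
    Eventually.of_forall fun t => (h.mem_Ioo t).2.trans hb⟩
  obtain ⟨b', hb', hb'1⟩ := exists_between (max_lt hb one_pos)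
  filter_upwards [hu b' ⟨(le_max_right b 0).trans_lt hb', hb'1⟩] with t ht
  exact ((le_max_left b 0).trans_lt hb').trans_le ht

end IsLogistic

/-- The quantity `H = (1 - U + σ U) V` of the Einstein–Vlasov system, at `σ = s`. -/
def flux (s u v : ℝ) : ℝ := (1 - u + s * u) * v

/-- The logistic rate of `U` in the Einstein–Vlasov system, at `σ = s` and `σ' = p`. -/
def rateU (l s p u v : ℝ) : ℝ :=
  (3 + 2 * l - (4 + 2 * l) * u) * (1 - v) - (1 + s - p) * flux s u v

/-- The logistic rate of `V` in the Einstein–Vlasov system, at `σ = s` and `σ' = p`. -/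
def rateV (s p u v : ℝ) : ℝ :=
  (2 * u - 1) * (1 - v + 2 * s * v) + p * flux s u v

section Rates

variable {l s p u v θ ρ K : ℝ}

lemma flux_pos (hs : 0 < s) (hu : u ∈ Ioo (0 : ℝ) 1) (hv : 0 < v) : 0 < flux s u v :=
  mul_pos (add_pos (sub_pos.2 hu.2) (mul_pos hs hu.1)) hv

lemma flux_le (hs : s ≤ 1) (hu : 0 ≤ u) (hv : 0 ≤ v) : flux s u v ≤ v := by
  have hsu : s * u ≤ u := mul_le_of_le_one_left hu hs
  exact mul_le_of_le_one_left hv (by linarith)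

lemma mul_le_flux (hs : s ≤ 1) (hu : u ≤ 1) (hv : 0 ≤ v) : s * v ≤ flux s u v := by
  have hsu : 0 ≤ (1 - s) * (1 - u) := mul_nonneg (sub_nonneg.2 hs) (sub_nonneg.2 hu)
  exact mul_le_mul_of_nonneg_right (by linarith) hv

lemma abs_mul_flux_le (hs : s ∈ Ioo (0 : ℝ) 1) (hu : u ∈ Ioo (0 : ℝ) 1) (hv : v ∈ Ioo (0 : ℝ) 1)
    (hp : |p| ≤ K) : |p * flux s u v| ≤ K * v := by
  rw [abs_mul, abs_of_pos (flux_pos hs.1 hu hv.1)]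
  exact mul_le_mul hp (flux_le hs.2.le hu.1.le hv.1.le) (flux_pos hs.1 hu hv.1).le
    ((abs_nonneg p).trans hp)

lemma abs_one_add_sub_le (hs : s ∈ Ioo (0 : ℝ) 1) (hp : |p| ≤ K) : |1 + s - p| ≤ 2 + K := by
  have hp' := abs_le.1 hp
  exact abs_le.2 ⟨by linarith [hs.1], by linarith [hs.2]⟩

lemma abs_rateU_le (hl : -1 < l) (hs : s ∈ Ioo (0 : ℝ) 1) (hu : u ∈ Ioo (0 : ℝ) 1)
    (hv : v ∈ Ioo (0 : ℝ) 1) (hp : |p| ≤ K) : |rateU l s p u v| ≤ 5 + 2 * l + K := by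
  have hK : 0 ≤ K := (abs_nonneg p).trans hp
  have hu' : |3 + 2 * l - (4 + 2 * l) * u| ≤ 3 + 2 * l :=
    abs_le.2 ⟨by nlinarith [hu.2], by nlinarith [hu.1]⟩
  have hv' : |1 - v| ≤ 1 := abs_le.2 ⟨by linarith [hv.2], by linarith [hv.1]⟩
  have hfirst : |(3 + 2 * l - (4 + 2 * l) * u) * (1 - v)| ≤ 3 + 2 * l := by
    rw [abs_mul]
    exact (mul_le_of_le_one_right (abs_nonneg _) hv').trans hu'
  have hsecond : |(1 + s - p) * flux s u v| ≤ (2 + K) * v :=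
    abs_mul_flux_le hs hu hv (abs_one_add_sub_le hs hp)
  have hsub := abs_sub ((3 + 2 * l - (4 + 2 * l) * u) * (1 - v)) ((1 + s - p) * flux s u v)
  rw [rateU]
  nlinarith [hv.2]

lemma abs_rateV_le (hs : s ∈ Ioo (0 : ℝ) 1) (hu : u ∈ Ioo (0 : ℝ) 1) (hv : v ∈ Ioo (0 : ℝ) 1)
    (hp : |p| ≤ K) : |rateV s p u v| ≤ 2 + K := by
  have hK : 0 ≤ K := (abs_nonneg p).trans hp
  have hu' : |2 * u - 1| ≤ 1 := abs_le.2 ⟨by linarith [hu.1], by linarith [hu.2]⟩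
  have hsv : 0 < s * v ∧ s * v < v := ⟨mul_pos hs.1 hv.1, mul_lt_of_lt_one_left hv.1 hs.2⟩
  have hv' : |1 - v + 2 * s * v| ≤ 2 := abs_le.2 ⟨by linarith [hv.2], by linarith [hv.2]⟩
  have hfirst : |(2 * u - 1) * (1 - v + 2 * s * v)| ≤ 2 := by
    rw [abs_mul]
    exact (mul_le_of_le_one_left (abs_nonneg _) hu').trans hv'
  have hsecond : |p * flux s u v| ≤ K * v := abs_mul_flux_le hs hu hv hp
  have hadd := abs_add_le ((2 * u - 1) * (1 - v + 2 * s * v)) (p * flux s u v)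
  rw [rateV]
  nlinarith [hv.2]

lemma le_rateU_of_le (hl : -1 < l) (hs : s ∈ Ioo (0 : ℝ) 1) (hu : u ∈ Ioo (0 : ℝ) 1)
    (hv : v ∈ Ioo (0 : ℝ) 1) (hp : |p| ≤ K) (huθ : u ≤ θ) :
    (3 + 2 * l - (4 + 2 * l) * θ) * (1 - v) - (2 + K) * v ≤ rateU l s p u v := by
  have hfirst : (3 + 2 * l - (4 + 2 * l) * θ) * (1 - v) ≤
      (3 + 2 * l - (4 + 2 * l) * u) * (1 - v) :=
    mul_le_mul_of_nonneg_right (by nlinarith) (sub_nonneg.2 hv.2.le)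
  have hsecond := (abs_le.1 (abs_mul_flux_le hs hu hv (abs_one_add_sub_le hs hp))).2
  rw [rateU]
  linarith

lemma le_rateV_of_le (hs : s ∈ Ioo (0 : ℝ) 1) (hu : u ∈ Ioo (0 : ℝ) 1) (hv : v ∈ Ioo (0 : ℝ) 1)
    (hp : |p| ≤ K) (hθ : 1 / 2 ≤ θ) (hθu : θ ≤ u) :
    (2 * θ - 1) * (1 - v) - K * v ≤ rateV s p u v := by
  have hsv : 0 < s * v := mul_pos hs.1 hv.1
  have hfirst : (2 * θ - 1) * (1 - v) ≤ (2 * u - 1) * (1 - v + 2 * s * v) :=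
    mul_le_mul (by linarith) (by linarith) (sub_nonneg.2 hv.2.le) (by linarith)
  have hsecond := (abs_le.1 (abs_mul_flux_le hs hu hv hp)).1
  rw [rateV]
  linarith

lemma rateV_pos (hs : 0 < s) (hp : 0 < p) (hu : u ∈ Ioo (0 : ℝ) 1) (hv : v ∈ Ioo (0 : ℝ) 1)
    (hu' : 1 / 2 ≤ u) : 0 < rateV s p u v := by
  have hsv : 0 < s * v := mul_pos hs hv.1
  exact add_pos_of_nonneg_of_pos (mul_nonneg (by linarith) (by linarith [hv.2]))
    (mul_pos hp (flux_pos hs hu hv.1))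

lemma rateU_le_of_one_sub_le (hl : -1 < l) (hs : s ∈ Ioo (0 : ℝ) 1) (hu : u ∈ Ioo (0 : ℝ) 1)
    (hv : v ∈ Ioo (0 : ℝ) 1) (hK : 0 ≤ K) (hp : p ≤ K) (hρu : 1 - ρ ≤ u) :
    rateU l s p u v ≤ ((4 + 2 * l) * ρ - 1) * (1 - v) + K * (ρ + s) := by
  have hfirst : (3 + 2 * l - (4 + 2 * l) * u) * (1 - v) ≤ ((4 + 2 * l) * ρ - 1) * (1 - v) :=
    mul_le_mul_of_nonneg_right (by nlinarith) (sub_nonneg.2 hv.2.le)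
  have hsu : s * u ≤ s := mul_le_of_le_one_right hs.1.le hu.2.le
  have hflux : flux s u v ≤ ρ + s :=
    (mul_le_of_le_one_right (add_nonneg (sub_nonneg.2 hu.2.le) (mul_pos hs.1 hu.1).le)
      hv.2.le).trans (by linarith)
  have hsecond : -(1 + s - p) * flux s u v ≤ K * (ρ + s) :=
    (mul_le_mul_of_nonneg_right (by linarith [hs.1]) (flux_pos hs.1 hu hv.1).le).trans
      (mul_le_mul_of_nonneg_left hflux hK)
  rw [rateU]
  linarith

/- The weight `3 + 2l` on `rateV` makes the `(1 - v)`-terms of the two rates add up to a multiple of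
`u (1 - v)`. -/
lemma le_rateU_add_mul_rateV (hl : -1 < l) (hs : 0 ≤ s) (hu : 0 ≤ u) (hv : 0 ≤ v) :
    (2 + 2 * l) * (u * (1 - v)) + ((4 + 2 * l) * p - 1 - (7 + 4 * l) * s) * flux s u v ≤
      rateU l s p u v + (3 + 2 * l) * rateV s p u v := by
  have hsum : v * (2 * u - 1) + flux s u v = u * v * (1 + s) := by rw [flux]; ring
  have hnonneg : 0 ≤ 2 * (3 + 2 * l) * s * (v * (2 * u - 1) + flux s u v) := by
    have : 0 < 3 + 2 * l := by linarith
    rw [hsum]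
    positivity
  rw [rateU, rateV]
  linarith

end Rates

/-- The `(U, V)`-part of the Einstein–Vlasov system along an interior orbit, with arbitrary
coefficient functions of time `S` and `P` in place of `σ` and `σ'`. -/
structure VlasovOrbit (l : ℝ) (S P U V : ℝ → ℝ) : Prop where
  S_mem_Ioo : ∀ t, S t ∈ Ioo (0 : ℝ) 1
  logistic_U : IsLogistic (fun t => rateU l (S t) (P t) (U t) (V t)) U
  logistic_V : IsLogistic (fun t => rateV (S t) (P t) (U t) (V t)) V

/-- The quantity `logit U + (3 + 2l) logit V`, which increases along orbits up to a convergent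
correction. -/
noncomputable def lyapunov (l u v : ℝ) : ℝ := logit u + (3 + 2 * l) * logit v

namespace VlasovOrbit

variable {l K : ℝ} {S P U V : ℝ → ℝ}

lemma tendsto_V_zero {E : ℝ → ℝ} {c m : ℝ} (h : VlasovOrbit l S P U V) (hc : 0 < c)
    (hS : ∀ᶠ t in atTop, c ≤ S t) (hP : ∀ᶠ t in atTop, |P t| ≤ K)
    (hE : ∀ t, HasDerivAt E (-(S t * flux (S t) (U t) (V t))) t) (hEm : Tendsto E atTop (𝓝 m)) :
    Tendsto V atTop (𝓝 0) := by
  have hV0 : ∀ t, 0 < V t := fun t => (h.logistic_V.mem_Ioo t).1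
  refine tendsto_zero_of_abs_deriv_le_of_le_deriv (K := 2 + K) (mul_pos hc hc)
    h.logistic_V.hasDerivAt (fun t => (hE t).neg) (Eventually.of_forall fun t => (hV0 t).le)
    ?_ ?_ hEm.neg
  · filter_upwards [hP] with t ht
    have hV := h.logistic_V.mem_Ioo t
    have hrate := abs_rateV_le (h.S_mem_Ioo t) (h.logistic_U.mem_Ioo t) hV ht
    have hVV : V t * (1 - V t) ≤ V t := mul_le_of_le_one_right hV.1.le (by linarith [hV.1])
    rw [abs_mul, abs_of_nonneg (mul_nonneg hV.1.le (sub_nonneg.2 hV.2.le)), mul_comm (2 + K)]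
    exact mul_le_mul hVV hrate (abs_nonneg _) hV.1.le
  · filter_upwards [hS] with t ht
    have hflux := mul_le_flux (h.S_mem_Ioo t).2.le (h.logistic_U.mem_Ioo t).2.le (hV0 t).le
    have hcV : c * V t ≤ S t * V t := mul_le_mul_of_nonneg_right ht (hV0 t).le
    rw [neg_neg, mul_assoc]
    exact mul_le_mul ht (hcV.trans hflux) (mul_pos hc (hV0 t)).le (hc.trans_le ht).le

lemma eventually_le_U_of_tendsto_V_zero {θ : ℝ} (h : VlasovOrbit l S P U V) (hl : -1 < l)
    (hP : ∀ᶠ t in atTop, |P t| ≤ K) (hV : Tendsto V atTop (𝓝 0))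
    (hθ : (4 + 2 * l) * θ < 3 + 2 * l) : ∀ᶠ t in atTop, θ ≤ U t := by
  obtain ⟨c, hc, hcθ⟩ := exists_between (sub_pos.2 hθ)
  have hlim : Tendsto (fun t => (3 + 2 * l - (4 + 2 * l) * θ) * (1 - V t) - (2 + K) * V t) atTop
      (𝓝 (3 + 2 * l - (4 + 2 * l) * θ)) := by
    simpa using ((hV.const_sub 1).const_mul (3 + 2 * l - (4 + 2 * l) * θ)).sub
      (hV.const_mul (2 + K))
  refine h.logistic_U.eventually_le_of_le_rate (by nlinarith) hc ?_
  filter_upwards [hP, hlim.eventually_const_lt hcθ] with t htP htc htθ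
  exact htc.le.trans (le_rateU_of_le hl (h.S_mem_Ioo t) (h.logistic_U.mem_Ioo t)
    (h.logistic_V.mem_Ioo t) htP htθ)

lemma not_tendsto_V_zero (h : VlasovOrbit l S P U V) (hl : -1 < l)
    (hP : ∀ᶠ t in atTop, |P t| ≤ K) : ¬ Tendsto V atTop (𝓝 0) := by
  intro hV
  obtain ⟨θ, hθ, hθ'⟩ : ∃ θ, 1 / 2 < θ ∧ θ < (3 + 2 * l) / (4 + 2 * l) :=
    exists_between ((lt_div_iff₀ (by linarith)).2 (by linarith))
  have hθU : ∀ᶠ t in atTop, θ ≤ U t := h.eventually_le_U_of_tendsto_V_zero hl hP hV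
    ((mul_comm _ _).trans_lt ((lt_div_iff₀ (by linarith)).1 hθ'))
  have hlim : Tendsto (fun t => (2 * θ - 1) * (1 - V t) - K * V t) atTop (𝓝 (2 * θ - 1)) := by
    simpa using ((hV.const_sub 1).const_mul (2 * θ - 1)).sub (hV.const_mul K)
  obtain ⟨c, hc, hcθ⟩ : ∃ c, 0 < c ∧ c < 2 * θ - 1 := exists_between (by linarith)
  have hV1 : Tendsto V atTop (𝓝 1) := by
    refine h.logistic_V.tendsto_one_of_le_rate hc ?_
    filter_upwards [hP, hθU, hlim.eventually_const_lt hcθ] with t htP htθ htc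
    exact htc.le.trans (le_rateV_of_le (h.S_mem_Ioo t) (h.logistic_U.mem_Ioo t)
      (h.logistic_V.mem_Ioo t) htP hθ.le htθ)
  exact zero_ne_one (tendsto_nhds_unique hV hV1)

theorem tendsto_radius_zero {σ p E : ℝ → ℝ}
    (h : VlasovOrbit l (fun t => σ (E t)) (fun t => p (E t)) U V) (hl : -1 < l)
    (hσpos : ∀ η, 0 < η → 0 < σ η) (hσ : ∀ η, 0 < η → ContinuousAt σ η)
    (hp : ∀ η, 0 < η → ContinuousAt p η) (hE : ∀ t, 0 < E t)
    (hEderiv : ∀ t, HasDerivAt E (-(σ (E t) * flux (σ (E t)) (U t) (V t))) t) :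
    Tendsto E atTop (𝓝[>] 0) := by
  have hanti : Antitone E := antitone_of_hasDerivAt_nonpos hEderiv fun t =>
    neg_nonpos.2 (mul_pos (hσpos _ (hE t)) (flux_pos (hσpos _ (hE t)) (h.logistic_U.mem_Ioo t)
      (h.logistic_V.mem_Ioo t).1)).le
  have hlim : Tendsto E atTop (𝓝 (⨅ t, E t)) :=
    tendsto_atTop_ciInf hanti ⟨0, forall_mem_range.2 fun t => (hE t).le⟩
  rcases (Real.iInf_nonneg fun t => (hE t).le).eq_or_lt with hm | hm
  · exact tendsto_nhdsWithin_iff.2 ⟨hm ▸ hlim, Eventually.of_forall hE⟩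
  · exfalso
    obtain ⟨c, hc, hcσ⟩ := exists_between (hσpos _ hm)
    have hS : ∀ᶠ t in atTop, c ≤ σ (E t) :=
      (((hσ _ hm).tendsto.comp hlim).eventually_const_lt hcσ).mono fun t ht => ht.le
    have hP : ∀ᶠ t in atTop, |p (E t)| ≤ |p (⨅ t, E t)| + 1 :=
      (((hp _ hm).tendsto.comp hlim).abs.eventually_lt_const (lt_add_one _)).mono
        fun t ht => ht.le
    exact h.not_tendsto_V_zero hl hP (h.tendsto_V_zero hc hS hP hEderiv hlim)

lemma tendsto_U_mul_one_sub_V_zero {W W' : ℝ → ℝ} {c L : ℝ} (h : VlasovOrbit l S P U V)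
    (hl : -1 < l) (hP : ∀ᶠ t in atTop, |P t| ≤ K) (hc : 0 < c)
    (hW : ∀ t, HasDerivAt W (W' t) t) (hW' : ∀ᶠ t in atTop, c * (U t * (1 - V t)) ≤ W' t)
    (hWL : Tendsto W atTop (𝓝 L)) : Tendsto (fun t => U t * (1 - V t)) atTop (𝓝 0) := by
  have hU := h.logistic_U.mem_Ioo
  have hV := h.logistic_V.one_sub.mem_Ioo
  refine tendsto_zero_of_abs_deriv_le_of_le_deriv (K := 7 + 2 * l + 2 * K) hc
    (fun t => (h.logistic_U.hasDerivAt t).mul (h.logistic_V.one_sub.hasDerivAt t)) hW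
    (Eventually.of_forall fun t => (mul_pos (hU t).1 (hV t).1).le) ?_ hW' hWL
  filter_upwards [hP] with t ht
  set A := rateU l (S t) (P t) (U t) (V t)
  set B := rateV (S t) (P t) (U t) (V t)
  have hfactor : U t * (1 - U t) * A * (1 - V t) + U t * ((1 - V t) * (1 - (1 - V t)) * -B) =
      ((1 - U t) * A - V t * B) * (U t * (1 - V t)) := by ring
  have hA' : |(1 - U t) * A| ≤ 5 + 2 * l + K := by
    rw [abs_mul, abs_of_pos (sub_pos.2 (hU t).2)]
    exact (mul_le_of_le_one_left (abs_nonneg A) (by linarith [(hU t).1])).trans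
      (abs_rateU_le hl (h.S_mem_Ioo t) (hU t) (h.logistic_V.mem_Ioo t) ht)
  have hB' : |V t * B| ≤ 2 + K := by
    rw [abs_mul, abs_of_pos (h.logistic_V.mem_Ioo t).1]
    exact (mul_le_of_le_one_left (abs_nonneg B) (h.logistic_V.mem_Ioo t).2.le).trans
      (abs_rateV_le (h.S_mem_Ioo t) (hU t) (h.logistic_V.mem_Ioo t) ht)
  have hnonneg : 0 ≤ U t * (1 - V t) := (mul_pos (hU t).1 (hV t).1).le
  rw [hfactor, abs_mul, abs_of_nonneg hnonneg]
  exact mul_le_mul_of_nonneg_right ((abs_sub _ _).trans (by linarith)) hnonneg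

lemma tendsto_V_one_of_tendsto_zero {k : ℝ} (h : VlasovOrbit l S P U V) (hl : -1 < l)
    (hUV : Tendsto (fun t => U t * (1 - V t)) atTop (𝓝 0))
    (hk : ∀ᶠ t in atTop, k ≤ lyapunov l (U t) (V t)) : Tendsto V atTop (𝓝 1) := by
  refine h.logistic_V.tendsto_one_of_forall_eventually_le fun b hb => ?_
  set u₀ := Real.sigmoid (k - (3 + 2 * l) * logit b)
  have hu₀ : 0 < u₀ := Real.sigmoid_pos _
  filter_upwards [hk, hUV.eventually_lt_const (mul_pos hu₀ (sub_pos.2 hb.2))] with t htk htUV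
  by_contra! hVb
  have hlogit : logit (V t) < logit b := (logit_lt_logit_iff (h.logistic_V.mem_Ioo t) hb).2 hVb
  have hu₀U : u₀ ≤ U t := by
    refine sigmoid_le_of_le_logit (h.logistic_U.mem_Ioo t) ?_
    have := mul_le_mul_of_nonneg_left hlogit.le (show 0 ≤ 3 + 2 * l by linarith)
    rw [lyapunov] at htk
    linarith
  exact htUV.not_ge (mul_le_mul hu₀U (by linarith) (sub_pos.2 hb.2).le (hu₀.le.trans hu₀U))

lemma eventually_lt_U_of_V_le {b u₀ : ℝ} (h : VlasovOrbit l S P U V) (hl : -1 < l)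
    (hlyap : Tendsto (fun t => lyapunov l (U t) (V t)) atTop atTop) (hb : b ∈ Ioo (0 : ℝ) 1)
    (hu₀ : u₀ ∈ Ioo (0 : ℝ) 1) : ∀ᶠ t in atTop, V t ≤ b → u₀ < U t := by
  filter_upwards [hlyap.eventually_gt_atTop (logit u₀ + (3 + 2 * l) * logit b)] with t ht hVb
  have hlogit : logit (V t) ≤ logit b :=
    not_lt.1 (mt (logit_lt_logit_iff hb (h.logistic_V.mem_Ioo t)).1 hVb.not_gt)
  have := mul_le_mul_of_nonneg_left hlogit (show 0 ≤ 3 + 2 * l by linarith)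
  rw [lyapunov] at ht
  exact (logit_lt_logit_iff hu₀ (h.logistic_U.mem_Ioo t)).1 (by linarith)

lemma exists_rateU_lt {b : ℝ} (h : VlasovOrbit l S P U V) (hl : -1 < l)
    (hS : Tendsto S atTop (𝓝 0)) (hK : 0 ≤ K) (hP : ∀ᶠ t in atTop, P t ≤ K) (hb : b < 1) :
    ∃ ρ ∈ Ioo (0 : ℝ) 1, ∃ c > 0, ∀ᶠ t in atTop, 1 - ρ < U t → V t ≤ b →
      c ≤ -rateU l (S t) (P t) (U t) (V t) := by
  set B : ℝ → ℝ → ℝ := fun ρ s => ((4 + 2 * l) * ρ - 1) * (1 - b) + K * (ρ + s) with hB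
  obtain ⟨ρ, hρ, hBρ⟩ : ∃ ρ ∈ Ioo (0 : ℝ) 1, B ρ 0 < 0 := by
    have hcont : Continuous fun ρ => B ρ 0 := by fun_prop
    have hlim : Tendsto (fun ρ => B ρ 0) (𝓝[>] 0) (𝓝 (B 0 0)) :=
      hcont.continuousAt.tendsto.mono_left nhdsWithin_le_nhds
    have hneg : B 0 0 < 0 := by simp only [hB]; linarith
    have hmem : ∀ᶠ ρ in 𝓝[>] (0 : ℝ), ρ ∈ Ioo (0 : ℝ) 1 := Ioo_mem_nhdsGT one_pos
    exact (hmem.and (hlim.eventually_lt_const hneg)).exists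
  obtain ⟨c, hc, hcB⟩ := exists_between (neg_pos.2 hBρ)
  have hcoeff : (4 + 2 * l) * ρ - 1 ≤ 0 := by
    by_contra! hpos
    have := mul_pos hpos (sub_pos.2 hb)
    have := mul_nonneg hK hρ.1.le
    simp only [hB] at hBρ
    linarith
  have hlim : Tendsto (fun t => B ρ (S t)) atTop (𝓝 (B ρ 0)) := by
    have hcont : Continuous (B ρ) := by fun_prop
    exact (hcont.tendsto 0).comp hS
  refine ⟨ρ, hρ, c, hc, ?_⟩
  filter_upwards [hP, hlim.eventually_lt_const (lt_neg_of_lt_neg hcB)] with t htP htB htU htV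
  have hrate := rateU_le_of_one_sub_le hl (h.S_mem_Ioo t) (h.logistic_U.mem_Ioo t)
    (h.logistic_V.mem_Ioo t) hK htP htU.le
  have := mul_le_mul_of_nonpos_left (sub_le_sub_left htV 1) hcoeff
  simp only [hB] at htB
  linarith

lemma tendsto_V_one_of_tendsto_lyapunov_atTop (h : VlasovOrbit l S P U V) (hl : -1 < l)
    (hS : Tendsto S atTop (𝓝 0)) (hP : ∀ᶠ t in atTop, P t ∈ Ioc 0 K)
    (hlyap : Tendsto (fun t => lyapunov l (U t) (V t)) atTop atTop) : Tendsto V atTop (𝓝 1) := by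
  refine h.logistic_V.tendsto_one_of_forall_eventually_le fun b hb => ?_
  have hK : 0 ≤ K := by
    obtain ⟨t, ht⟩ := hP.exists
    exact ht.1.le.trans ht.2
  refine h.logistic_V.eventually_le_of_frequently_le (fun hVb => ?_) ?_
  · obtain ⟨ρ, hρ, c, hc, hrate⟩ := h.exists_rateU_lt hl hS hK (hP.mono fun t ht => ht.2) hb.2
    have hVb' : ∀ᶠ t in atTop, V t ≤ b := hVb.mono fun t ht => (not_le.1 ht).le
    have hUρ : ∀ᶠ t in atTop, 1 - ρ < U t := hVb'.mp <|
      h.eventually_lt_U_of_V_le hl hlyap hb ⟨sub_pos.2 hρ.2, sub_lt_self 1 hρ.1⟩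
    have hlim : Tendsto (fun t => 1 - U t) atTop (𝓝 1) := by
      refine h.logistic_U.one_sub.tendsto_one_of_le_rate hc ?_
      filter_upwards [hrate, hVb', hUρ] with t ht htV htU using ht htU htV
    obtain ⟨t, htU, htρ⟩ := (hUρ.and (hlim.eventually_const_lt hρ.2)).exists
    linarith
  · filter_upwards [hP, h.eventually_lt_U_of_V_le hl hlyap hb (u₀ := 1 / 2) (by norm_num)]
      with t htP htU hVb
    exact rateV_pos (h.S_mem_Ioo t).1 htP.1 (h.logistic_U.mem_Ioo t) (h.logistic_V.mem_Ioo t)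
      (htU hVb.le).le

theorem tendsto_V_one {R R' : ℝ → ℝ} {r : ℝ} (h : VlasovOrbit l S P U V) (hl : -1 < l)
    (hS : Tendsto S atTop (𝓝 0)) (hP : ∀ᶠ t in atTop, P t ∈ Ioc 0 K)
    (hR : ∀ t, HasDerivAt R (R' t) t) (hRlim : Tendsto R atTop (𝓝 r))
    (hR' : ∀ᶠ t in atTop, R' t ≤
      ((4 + 2 * l) * P t - 1 - (7 + 4 * l) * S t) * flux (S t) (U t) (V t)) :
    Tendsto V atTop (𝓝 1) := by
  have hU := h.logistic_U.mem_Ioo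
  have hV := h.logistic_V.mem_Ioo
  set W : ℝ → ℝ := fun t => lyapunov l (U t) (V t) - R t
  have hPabs : ∀ᶠ t in atTop, |P t| ≤ K := hP.mono fun t ht => (abs_of_pos ht.1).trans_le ht.2
  have hlyap : (fun t => W t + R t) = fun t => lyapunov l (U t) (V t) :=
    funext fun t => sub_add_cancel _ _
  have hW : ∀ t, HasDerivAt W (rateU l (S t) (P t) (U t) (V t)
      + (3 + 2 * l) * rateV (S t) (P t) (U t) (V t) - R' t) t := fun t =>
    ((h.logistic_U.hasDerivAt_logit t).add
      ((h.logistic_V.hasDerivAt_logit t).const_mul (3 + 2 * l))).sub (hR t)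
  have hW' : ∀ᶠ t in atTop, (2 + 2 * l) * (U t * (1 - V t)) ≤ rateU l (S t) (P t) (U t) (V t)
      + (3 + 2 * l) * rateV (S t) (P t) (U t) (V t) - R' t := hR'.mono fun t ht => by
    have := le_rateU_add_mul_rateV (p := P t) hl (h.S_mem_Ioo t).1.le (hU t).1.le (hV t).1.le
    linarith
  have hl' : 0 < 2 + 2 * l := by linarith
  rcases tendsto_atTop_or_exists_tendsto_of_deriv_nonneg hW (hW'.mono fun t ht =>
    (mul_pos hl' (mul_pos (hU t).1 (sub_pos.2 (hV t).2))).le.trans ht) with hWlim | ⟨L, hWlim⟩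
  · exact h.tendsto_V_one_of_tendsto_lyapunov_atTop hl hS hP (hlyap ▸ hWlim.atTop_add hRlim)
  · have hlyaplim : Tendsto (fun t => lyapunov l (U t) (V t)) atTop (𝓝 (L + r)) :=
      hlyap ▸ hWlim.add hRlim
    exact h.tendsto_V_one_of_tendsto_zero hl
      (h.tendsto_U_mul_one_sub_V_zero hl hPabs hl' hW hW' hWlim)
      ((hlyaplim.eventually_const_lt (sub_one_lt _)).mono fun t ht => ht.le)

theorem tendsto_V_one_of_sub_mul_le {E Ω G : ℝ → ℝ} {C e g : ℝ} (h : VlasovOrbit l S P U V)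
    (hl : -1 < l) (hS : Tendsto S atTop (𝓝 0))
    (hE : ∀ t, HasDerivAt E (-(S t * flux (S t) (U t) (V t))) t) (hElim : Tendsto E atTop (𝓝 e))
    (hΩ : IsLogistic (fun t => -(G t * flux (S t) (U t) (V t))) Ω)
    (hΩlim : Tendsto Ω atTop (𝓝 0)) (hg : 0 < g) (hG : ∀ t, g ≤ G t)
    (hlower : ∀ᶠ t in atTop, 1 / (4 + 2 * l) - C * Ω t ≤ P t) (hupper : ∀ᶠ t in atTop, P t ≤ K) :
    Tendsto V atTop (𝓝 1) := by
  have hl4 : 0 < 4 + 2 * l := by linarith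
  have hPpos : ∀ᶠ t in atTop, 0 < P t := by
    have hlim : Tendsto (fun t => 1 / (4 + 2 * l) - C * Ω t) atTop (𝓝 (1 / (4 + 2 * l))) := by
      simpa using (hΩlim.const_mul C).const_sub (1 / (4 + 2 * l))
    filter_upwards [hlower, hlim.eventually_const_lt (one_div_pos.2 hl4)] with t ht htpos
      using htpos.trans_le ht
  set C' := (4 + 2 * l) * |C| / g
  have hC' : ∀ t, (4 + 2 * l) * (C * Ω t) ≤ C' * (Ω t * G t) := fun t => by
    have hΩt : 0 ≤ Ω t := (hΩ.mem_Ioo t).1.le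
    calc (4 + 2 * l) * (C * Ω t) ≤ (4 + 2 * l) * (|C| * Ω t) := by gcongr; exact le_abs_self C
      _ = C' * (Ω t * g) := by simp only [C']; field_simp
      _ ≤ C' * (Ω t * G t) := by gcongr; exact hG t
  refine h.tendsto_V_one hl hS (hPpos.and hupper)
    (fun t => ((hE t).const_mul (7 + 4 * l)).sub ((hΩ.hasDerivAt_log_one_sub t).const_mul C'))
    ((hElim.const_mul (7 + 4 * l)).sub (((hΩlim.const_sub 1).log (by norm_num)).const_mul C')) ?_
  filter_upwards [hlower] with t ht
  have hflux := flux_pos (h.S_mem_Ioo t).1 (h.logistic_U.mem_Ioo t) (h.logistic_V.mem_Ioo t).1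
  have hPt : -(C' * (Ω t * G t)) ≤ (4 + 2 * l) * P t - 1 := by
    have hmul := mul_le_mul_of_nonneg_left ht hl4.le
    rw [mul_sub, mul_one_div_cancel hl4.ne'] at hmul
    linarith [hC' t]
  linarith [mul_le_mul_of_nonneg_right hPt hflux.le]

end VlasovOrbit

lemma tendsto_div_one_add_zero {α : Type*} {f : Filter α} {w : α → ℝ} (hw : Tendsto w f (𝓝 0)) :
    Tendsto (fun x => w x / (1 + w x)) f (𝓝 0) := by
  simpa [Pi.div_def] using hw.div (hw.const_add 1) (by norm_num)

lemma exists_eventually_sub_mul_le {ω p s : ℝ → ℝ} {ε p₀ : ℝ} (hε : 0 < ε)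
    (hωpos : ∀ η, 0 < η → 0 < ω η) (hω0 : Tendsto ω (𝓝[>] 0) (𝓝 0))
    (hs : DifferentiableWithinAt ℝ s (Ico 0 ε) 0)
    (hsp : ∀ η, 0 < η → ω η / (1 + ω η) < ε → s (ω η / (1 + ω η)) = p η)
    (hp : Tendsto p (𝓝[>] 0) (𝓝 p₀)) :
    ∃ C, ∀ᶠ η in 𝓝[>] 0, p₀ - C * (ω η / (1 + ω η)) ≤ p η := by
  have hpos : ∀ᶠ η : ℝ in 𝓝[>] 0, 0 < η := self_mem_nhdsWithin
  have hq0 := tendsto_div_one_add_zero hω0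
  have hqε := hq0.eventually_lt_const hε
  have hq : Tendsto (fun η => ω η / (1 + ω η)) (𝓝[>] 0) (𝓝[Ico 0 ε] 0) :=
    tendsto_nhdsWithin_iff.2 ⟨hq0, by
      filter_upwards [hpos, hqε] with η hη hηε using
        ⟨(div_one_add_mem_Ioo (hωpos η hη)).1.le, hηε⟩⟩
  have hsq : (s ∘ fun η => ω η / (1 + ω η)) =ᶠ[𝓝[>] 0] p := by
    filter_upwards [hpos, hqε] with η hη hηε using hsp η hη hηε
  obtain ⟨C, hC⟩ := (isBigO_sub_of_differentiableWithinAt_of_tendsto hs hq hsq hp).bound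
  refine ⟨C, ?_⟩
  filter_upwards [hC, hpos] with η hη hη0
  rw [sub_zero, Real.norm_of_nonneg (div_one_add_mem_Ioo (hωpos η hη0)).1.le] at hη
  linarith [(abs_le.1 hη).1]

theorem stmt5_general
    (l : ℝ) (hl : -1 < l)
    (σ σ' : ℝ → ℝ)
    (hσderiv : ∀ η : ℝ, 0 < η → HasDerivAt σ (σ' η) η)
    (hσ'cont : ContinuousOn σ' (Ioi 0))
    (hσrange : ∀ η : ℝ, 0 < η → σ η ∈ Ioo 0 1)
    (hσ0 : Tendsto σ (𝓝[>] 0) (𝓝 0))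
    (ω ω' : ℝ → ℝ)
    (hωderiv : ∀ η : ℝ, 0 < η → HasDerivAt ω (ω' η) η)
    (hωpos : ∀ η : ℝ, 0 < η → 0 < ω η)
    (hω0 : Tendsto ω (𝓝[>] 0) (𝓝 0))
    (F : ℝ → ℝ) (hFdef : ∀ η : ℝ, 0 < η → F η = σ η * (ω' η / ω η))
    (Flo : ℝ) (hFlo : 0 < Flo) (hFbound : ∀ η : ℝ, 0 < η → Flo ≤ F η)
    (U V E Ω : ℝ → ℝ)
    (hΩdef : ∀ t : ℝ, Ω t = ω (E t) / (1 + ω (E t)))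
    (hU : ∀ t : ℝ, U t ∈ Ioo (0 : ℝ) 1) (hV : ∀ t : ℝ, V t ∈ Ioo (0 : ℝ) 1)
    (hE : ∀ t : ℝ, 0 < E t) (hEcont : Continuous E)
    (hUode : ∀ t : ℝ, HasDerivAt U
      (U t * (1 - U t) * ((3 + 2 * l - (4 + 2 * l) * U t) * (1 - V t)
        - (1 + σ (E t) - σ' (E t)) * ((1 - U t + σ (E t) * U t) * V t))) t)
    (hVode : ∀ t : ℝ, HasDerivAt V
      (V t * (1 - V t) * ((2 * U t - 1) * (1 - V t + 2 * σ (E t) * V t)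
        + σ' (E t) * ((1 - U t + σ (E t) * U t) * V t))) t)
    (hΩode : ∀ t : ℝ, HasDerivAt Ω
      (-(Ω t * (1 - Ω t) * F (E t) * ((1 - U t + σ (E t) * U t) * V t))) t)
    (C K : ℝ)
    (hlower : ∀ᶠ η in 𝓝[>] 0, 1 / (4 + 2 * l) - C * (ω η / (1 + ω η)) ≤ σ' η)
    (hupper : ∀ᶠ η in 𝓝[>] 0, σ' η ≤ K) :
    Tendsto Ω atTop (𝓝 0) ∧ Tendsto V atTop (𝓝 1) := by
  have horb : VlasovOrbit l (fun t => σ (E t)) (fun t => σ' (E t)) U V :=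
    ⟨fun t => hσrange _ (hE t), ⟨hU, hUode⟩, ⟨hV, hVode⟩⟩
  have hΩ : IsLogistic (fun t => -(F (E t) * flux (σ (E t)) (U t) (V t))) Ω :=
    ⟨fun t => hΩdef t ▸ div_one_add_mem_Ioo (hωpos _ (hE t)),
      fun t => (hΩode t).congr_deriv (by simp only [flux]; ring)⟩
  have hEderiv : ∀ t, HasDerivAt E (-(σ (E t) * flux (σ (E t)) (U t) (V t))) t := fun t => by
    have hF : σ (E t) * (ω' (E t) / ω (E t)) ≠ 0 := by
      rw [← hFdef _ (hE t)]
      exact (hFlo.trans_le (hFbound _ (hE t))).ne'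
    have hω' : ω' (E t) ≠ 0 := (div_ne_zero_iff.1 (right_ne_zero_of_mul hF)).1
    refine (hΩ.hasDerivAt_of_eq_div_one_add hΩdef (fun t => hωpos _ (hE t)) hEcont.continuousAt
      (hωderiv _ (hE t)) hω').congr_deriv ?_
    rw [hFdef _ (hE t), div_eq_iff (right_ne_zero_of_mul hF)]
    ring
  have hElim : Tendsto E atTop (𝓝[>] 0) :=
    horb.tendsto_radius_zero hl (fun η hη => (hσrange η hη).1)
      (fun η hη => (hσderiv η hη).continuousAt)
      (fun η hη => hσ'cont.continuousAt (Ioi_mem_nhds hη)) hE hEderiv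
  have hΩlim : Tendsto Ω atTop (𝓝 0) :=
    funext hΩdef ▸ tendsto_div_one_add_zero (hω0.comp hElim)
  have hlower' : ∀ᶠ t in atTop, 1 / (4 + 2 * l) - C * Ω t ≤ σ' (E t) := by
    simpa only [hΩdef] using hElim.eventually hlower
  exact ⟨hΩlim, horb.tendsto_V_one_of_sub_mul_le hl (hσ0.comp hElim) hEderiv
    (tendsto_nhds_of_tendsto_nhdsWithin hElim) hΩ hΩlim hFlo (fun t => hFbound _ (hE t)) hlower'
    (hElim.eventually hupper)⟩

/-- If `σ'`, as a function of `Ω`, extends to a `C¹` function on `[0,ε)`, and `σ'₀ = lim_{η→0⁺} σ'(η)` satisfies `σ'₀ ≥ 1/(4+2l)`, then every interior orbit satisfies `Ω → 0` and `V → 1` as `λ → +∞`. -/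
theorem stmt5
    (l : ℝ) (hl : -1 < l)
    (σ σ' : ℝ → ℝ)
    (hσderiv : ∀ η : ℝ, 0 < η → HasDerivAt σ (σ' η) η)
    (hσ'cont : ContinuousOn σ' (Ioi 0))
    (hσrange : ∀ η : ℝ, 0 < η → σ η ∈ Ioo 0 (1 / (3 + 2 * l)))
    (hσ0 : Tendsto σ (nhdsWithin 0 (Ioi 0)) (nhds 0))
    (k₁ k₂ : ℝ) (hk₁ : 0 < k₁) (hk₁₂ : k₁ < k₂)
    (hσ'near : ∃ η₀ > (0:ℝ), ∀ η ∈ Ioo (0:ℝ) η₀, σ' η ∈ Ioo k₁ k₂)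
    (ω ω' : ℝ → ℝ)
    (hωsmooth : ContDiffOn ℝ (⊤ : ℕ∞) ω (Ioi 0))
    (hωderiv : ∀ η : ℝ, 0 < η → HasDerivAt ω (ω' η) η)
    (hωpos : ∀ η : ℝ, 0 < η → 0 < ω η)
    (hωmono : StrictMonoOn ω (Ioi 0))
    (hω0 : Tendsto ω (nhdsWithin 0 (Ioi 0)) (nhds 0))
    (F : ℝ → ℝ) (hFdef : ∀ η : ℝ, 0 < η → F η = σ η * (ω' η / ω η))
    (Flo Fhi : ℝ) (hFlo : 0 < Flo)
    (hFbounds : ∀ η : ℝ, 0 < η → F η ∈ Icc Flo Fhi)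
    (U V E Ω : ℝ → ℝ)
    (hΩdef : ∀ t : ℝ, Ω t = ω (E t) / (1 + ω (E t)))
    (hU : ∀ t : ℝ, U t ∈ Ioo (0:ℝ) 1) (hV : ∀ t : ℝ, V t ∈ Ioo (0:ℝ) 1)
    (hE : ∀ t : ℝ, 0 < E t) (hEcont : Continuous E)
    (hUode : ∀ t : ℝ, HasDerivAt U
      (U t * (1 - U t) * ((3 + 2 * l - (4 + 2 * l) * U t) * (1 - V t)
        - (1 + σ (E t) - σ' (E t)) * ((1 - U t + σ (E t) * U t) * V t))) t)
    (hVode : ∀ t : ℝ, HasDerivAt V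
      (V t * (1 - V t) * ((2 * U t - 1) * (1 - V t + 2 * σ (E t) * V t)
        + σ' (E t) * ((1 - U t + σ (E t) * U t) * V t))) t)
    (hΩode : ∀ t : ℝ, HasDerivAt Ω
      (-(Ω t * (1 - Ω t) * F (E t) * ((1 - U t + σ (E t) * U t) * V t))) t)
    (ε σ'₀ : ℝ) (hε : 0 < ε) (s : ℝ → ℝ)
    (hsC1 : ContDiffOn ℝ 1 s (Ico 0 ε))
    (hscompat : ∀ η : ℝ, 0 < η → ω η / (1 + ω η) < ε →
      s (ω η / (1 + ω η)) = σ' η)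
    (hσ'lim : Tendsto σ' (nhdsWithin 0 (Ioi 0)) (nhds σ'₀))
    (hge : 1 / (4 + 2 * l) ≤ σ'₀) :
    Tendsto Ω atTop (nhds 0) ∧ Tendsto V atTop (nhds 1) := by
  obtain ⟨C, hC⟩ := exists_eventually_sub_mul_le hε hωpos hω0
    (hsC1.differentiableOn one_ne_zero 0 ⟨le_rfl, hε⟩) hscompat hσ'lim
  have hσ1 : 1 / (3 + 2 * l) < 1 := (div_lt_one (by linarith)).2 (by linarith)
  exact stmt5_general l hl σ σ' hσderiv hσ'cont
    (fun η hη => ⟨(hσrange η hη).1, (hσrange η hη).2.trans hσ1⟩) hσ0 ω ω' hωderiv hωpos hω0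
    F hFdef Flo hFlo (fun η hη => (hFbounds η hη).1) U V E Ω hΩdef hU hV hE hEcont hUode hVode
    hΩode C (σ'₀ + 1) (hC.mono fun η hη => (sub_le_sub_right hge _).trans hη)
    (hσ'lim.eventually_le_const (lt_add_one _))
end
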